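/- Let d ≥ 3 and let 𝔢 be a dispersion relation of class C³ satisfying condition (M). There exists a constant c(𝔢) > 0, depending only on 𝔢, such that for every potential V : Γ → ℝ with Φ_{2,3}(V) < c(𝔢), the bounded self-adjoint operator B = h(|∇𝔢|²) + C_V is positive (⟨ψ, Bψ⟩ ≥ 0 for all ψ ∈ ℓ²(Γ)) and has no eigenvalues. -/

import Mathlib

open MeasureTheory Complex Real
open scoped ENNReal

noncomputable section

namespace LatSch

/-- The lattice `Γ = ℤ^d`. -/
abbrev Γd (d : ℕ) := Fin d → ℤ

/-- The Hilbert space `ℓ²(Γ)`. -/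
abbrev L2 (d : ℕ) := lp (fun _ : Γd d => ℂ) 2

/-- Euclidean norm of a lattice point. -/
def lnorm {d : ℕ} (x : Γd d) : ℝ := Real.sqrt (∑ i, ((x i : ℝ)) ^ 2)

/-- The standard basis vector `δ_x` of `ℓ²(Γ)`. -/
def delta {d : ℕ} (x : Γd d) : L2 d := lp.single 2 x 1

local notation "⟪" a ", " b "⟫" => @inner ℂ _ _ a b

/-- The cube `[-π, π]^d`, a fundamental domain of the torus. -/
def torusBox (d : ℕ) : Set (Fin d → ℝ) := Set.univ.pi fun _ => Set.Icc (-π) π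

/-- `⟨p, m⟩` for `p ∈ ℝ^d`, `m ∈ ℤ^d`. -/
def dotZ {d : ℕ} (p : Fin d → ℝ) (m : Γd d) : ℝ := ∑ i, p i * (m i : ℝ)

/-- Fourier coefficient `f̂(m) = (2π)^{-d} ∫_{[-π,π]^d} f(p) e^{i⟨p,m⟩} dp`. -/
def fCoeff {d : ℕ} (f : (Fin d → ℝ) → ℝ) (m : Γd d) : ℂ :=
  ((1 / (2 * π) ^ d : ℝ) : ℂ) *
    ∫ p in torusBox d, (f p : ℂ) * Complex.exp (Complex.I * (dotZ p m : ℝ))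

/-- `H` is the Fourier multiplier (hopping matrix) `h(f)`, characterized by its
matrix elements `⟨δ_x, H δ_y⟩ = f̂(x - y)`. -/
def IsMultiplier {d : ℕ} (f : (Fin d → ℝ) → ℝ) (H : L2 d →L[ℂ] L2 d) : Prop :=
  ∀ x y : Γd d, ⟪delta x, H (delta y)⟫ = fCoeff f (x - y)

/-- `M` is the operator of multiplication by the potential `V`. -/
def IsMulOp {d : ℕ} (V : Γd d → ℝ) (M : L2 d →L[ℂ] L2 d) : Prop :=
  ∀ (ψ : L2 d) (x : Γd d), (M ψ : ∀ _ : Γd d, ℂ) x = (V x : ℂ) * (ψ : ∀ _ : Γd d, ℂ) x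

/-- Partial derivative `∂_{p_k} f (p)`. -/
def pd {d : ℕ} (f : (Fin d → ℝ) → ℝ) (k : Fin d) (p : Fin d → ℝ) : ℝ :=
  fderiv ℝ f p (Pi.single k 1)

/-- `|∇f|²(p) = Σ_k (∂_{p_k} f(p))²`. -/
def gradSq {d : ℕ} (f : (Fin d → ℝ) → ℝ) (p : Fin d → ℝ) : ℝ := ∑ k, pd f k p ^ 2

/-- The Hessian matrix of `f` at `p`. -/
def hess {d : ℕ} (f : (Fin d → ℝ) → ℝ) (p : Fin d → ℝ) : Matrix (Fin d) (Fin d) ℝ :=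
  Matrix.of fun i j => fderiv ℝ (fun q => fderiv ℝ f q (Pi.single j 1)) p (Pi.single i 1)

/-- All critical points of `f` are nondegenerate (`f` is a Morse function). -/
def IsMorse {d : ℕ} (f : (Fin d → ℝ) → ℝ) : Prop :=
  ∀ p, fderiv ℝ f p = 0 → (hess f p).det ≠ 0

/-- `2πℤ^d`-periodicity. -/
def Periodic2pi {d : ℕ} (f : (Fin d → ℝ) → ℝ) : Prop :=
  ∀ (p : Fin d → ℝ) (m : Γd d), f (p + fun i => 2 * π * (m i : ℝ)) = f p

/-- A dispersion relation: a `2πℤ^d`-periodic function with minimum `0`. -/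
def IsDispersion {d : ℕ} (f : (Fin d → ℝ) → ℝ) : Prop :=
  Periodic2pi f ∧ (∀ p, 0 ≤ f p) ∧ (∃ p, f p = 0)

/-- Condition (M): `𝔢` and `|∇𝔢|²` are Morse functions. -/
def CondM {d : ℕ} (f : (Fin d → ℝ) → ℝ) : Prop := IsMorse f ∧ IsMorse (gradSq f)

/-- `Φ_{m,n}(V) = (Σ_x |V(x)|^{1/m} (1+|x|)^n)^m`, valued in `[0,∞]`. -/
def Phi {d : ℕ} (m n : ℕ) (V : Γd d → ℝ) : ℝ≥0∞ :=
  (∑' x : Γd d, ENNReal.ofReal (|V x| ^ ((1 : ℝ) / m) * (1 + lnorm x) ^ n)) ^ m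

/-- The set of eigenvectors of `H` (with real eigenvalue). -/
def eigvecs {d : ℕ} (H : L2 d →L[ℂ] L2 d) : Set (L2 d) :=
  {ψ : L2 d | ψ ≠ 0 ∧ ∃ μ : ℝ, H ψ = (μ : ℂ) • ψ}

/-- `N_pp[H]`: the Hilbert-space dimension of the closed linear span of all
eigenvectors of `H`. -/
def Npp {d : ℕ} (H : L2 d →L[ℂ] L2 d) : Cardinal :=
  Module.rank ℂ ((Submodule.span ℂ (eigvecs H)).topologicalClosure)

/-- The Fourier transform `ĝ_x(p) = (i/2·|∇𝔢(p)|² + ⟨∇𝔢(p), x⟩) e^{-i⟨p,x⟩}`. -/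
def ghat {d : ℕ} (e : (Fin d → ℝ) → ℝ) (x : Γd d) (p : Fin d → ℝ) : ℂ :=
  ((Complex.I / 2) * ((gradSq e p : ℝ) : ℂ) + ((∑ k, pd e k p * (x k : ℝ) : ℝ) : ℂ)) *
    Complex.exp (-(Complex.I * (dotZ p x : ℝ)))

/-- `g : Γ → ℓ²(Γ)` is the family of vectors `g_x` with Fourier transform `ĝ_x`. -/
def IsGVec {d : ℕ} (e : (Fin d → ℝ) → ℝ) (g : Γd d → L2 d) : Prop :=
  ∀ x m : Γd d,
    (g x : ∀ _ : Γd d, ℂ) m =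
      ((1 / (2 * π) ^ d : ℝ) : ℂ) *
        ∫ p in torusBox d, ghat e x p * Complex.exp (Complex.I * (dotZ p m : ℝ))

/-- `C` is the bounded self-adjoint realization
`C_V = Σ_x i V(x) (|δ_x⟩⟨g_x| - |g_x⟩⟨δ_x|)` of the commutator `i[V, A(𝔢)]`. -/
def IsCommOp {d : ℕ} (V : Γd d → ℝ) (g : Γd d → L2 d) (C : L2 d →L[ℂ] L2 d) : Prop :=
  ∀ ψ : L2 d,
    HasSum (fun x : Γd d =>
      (Complex.I * (V x : ℂ)) • (⟪g x, ψ⟫ • delta x - ⟪delta x, ψ⟫ • g x)) (C ψ)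

/-- `R` is the resolvent `(z - H)^{-1}`. -/
def IsResolventAt {d : ℕ} (H : L2 d →L[ℂ] L2 d) (z : ℂ) (R : L2 d →L[ℂ] L2 d) : Prop :=
  R.comp (z • (1 : L2 d →L[ℂ] L2 d) - H) = 1 ∧ (z • (1 : L2 d →L[ℂ] L2 d) - H).comp R = 1

/-- `‖f‖_{C^m} ≤ C`: all partial derivatives of order `≤ m` are bounded by `C`. -/
def CmNormLe {d : ℕ} (m : ℕ) (f : (Fin d → ℝ) → ℝ) (C : ℝ) : Prop :=
  ∀ j : ℕ, j ≤ m → ∀ (p : Fin d → ℝ) (k : Fin j → Fin d),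
    |iteratedFDeriv ℝ j f p (fun i => Pi.single (k i) 1)| ≤ C

/-- `K(𝔢) ≥ K`: at every critical point, every eigenvalue `λ` of the Hessian
satisfies `|λ|^{1/2} ≥ K`. -/
def MinCurvGe {d : ℕ} (f : (Fin d → ℝ) → ℝ) (K : ℝ) : Prop :=
  ∀ p, fderiv ℝ f p = 0 → ∀ (lam : ℝ) (v : Fin d → ℝ), v ≠ 0 →
    (hess f p).mulVec v = lam • v → K ^ 2 ≤ |lam|

/-- The set of thresholds `Thr(𝔢) = 𝔢(Crit(𝔢))`. -/
def Thr {d : ℕ} (f : (Fin d → ℝ) → ℝ) : Set ℝ := f '' {p | fderiv ℝ f p = 0}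


/-- The number of strictly negative eigenvalues of `C`, counted with multiplicity:
the dimension of the span of eigenvectors with strictly negative eigenvalue. -/
def NegCount {d : ℕ} (C : L2 d →L[ℂ] L2 d) : Cardinal :=
  Module.rank ℂ (Submodule.span ℂ
    {ψ : L2 d | ψ ≠ 0 ∧ ∃ μ : ℝ, μ < 0 ∧ C ψ = (μ : ℂ) • ψ})

/-- The number of strictly positive eigenvalues of `C`, counted with multiplicity. -/
def PosCount {d : ℕ} (C : L2 d →L[ℂ] L2 d) : Cardinal :=
  Module.rank ℂ (Submodule.span ℂ
    {ψ : L2 d | ψ ≠ 0 ∧ ∃ μ : ℝ, 0 < μ ∧ C ψ = (μ : ℂ) • ψ})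

/-!
In the momentum representation `ℓ²(Γ)` becomes `L²` of the torus, `δ_x` and `g_x` become functions
with Lipschitz constants `O(1 + |x|)` and `O((1 + |x|)²)`, and `B` becomes multiplication by
`|∇𝔢|²` plus a series of rank-two operators. For `f = 𝔢` and for `f = |∇𝔢|²` the function `|∇f|⁻²`
is integrable: near a nondegenerate critical point `p₀` it is `O(|p - p₀|⁻²)`, and `d ≥ 3`. By the
Cauchy–Schwarz inequality, pairing `u` with a bounded function therefore costs at most a constant
times `⟨u, |∇f|² u⟩^{1/2}`.

* Positivity: with `f = 𝔢`, `|⟨u, C_V u⟩|` is at most a small multiple of `⟨u, |∇𝔢|² u⟩`.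
* Absence of eigenvalues: for an eigenvector `u` of `B`, the commutator of `B` with any bounded
  operator has expectation zero in `u`. Take for the operator the difference quotient in the
  direction `k` weighted by `∂_k f`, where `f = |∇𝔢|²`. Its commutator with `f` tends to `(∂_k f)²`
  as the step tends to zero, while its commutator with `C_V` is at most a small multiple of
  `⟨u, |∇f|² u⟩`, uniformly in the step, because it maps Lipschitz functions to bounded ones.
  Summing over `k` gives `⟨u, |∇f|² u⟩ ≤ κ ⟨u, |∇f|² u⟩` with `κ < 1`, so `u = 0`, as `∇f ≠ 0`
  almost everywhere.
-/

section CommutatorSeries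

variable {H K ι : Type*} [NormedAddCommGroup H] [InnerProductSpace ℂ H]
  [NormedAddCommGroup K] [InnerProductSpace ℂ K]

/-- `C = Σ_x i V(x) (|δ_x⟩⟨γ_x| - |γ_x⟩⟨δ_x|)` as a strongly convergent series: the relation
`IsCommOp` for arbitrary families of vectors in a Hilbert space, so that it can be moved to the
torus. -/
def IsCommSeries (V : ι → ℝ) (δ γ : ι → H) (C : H →L[ℂ] H) : Prop :=
  ∀ ψ, HasSum (fun x => (I * (V x : ℂ)) • (⟪γ x, ψ⟫ • δ x - ⟪δ x, ψ⟫ • γ x)) (C ψ)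

namespace IsCommSeries

variable {V : ι → ℝ} {δ γ : ι → H} {C : H →L[ℂ] H}

theorem hasSum_inner (hC : IsCommSeries V δ γ C) (w v : H) :
    HasSum (fun x => I * V x * (⟪γ x, v⟫ * ⟪w, δ x⟫ - ⟪δ x, v⟫ * ⟪w, γ x⟫)) ⟪w, C v⟫ := by
  simpa only [Function.comp_def, innerSL_apply_apply, inner_smul_right, inner_sub_right]
    using (hC v).mapL (innerSL ℂ w)

theorem isSymmetric (hC : IsCommSeries V δ γ C) : (C : H →ₗ[ℂ] H).IsSymmetric := by
  intro v w
  have hconj := Complex.hasSum_conj'.2 (hC.hasSum_inner w v)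
  rw [inner_conj_symm] at hconj
  refine hconj.unique ((hC.hasSum_inner v w).congr_fun fun x => ?_)
  simp only [map_mul, map_sub, conj_I, conj_ofReal, inner_conj_symm]
  ring

theorem conj (hC : IsCommSeries V δ γ C) (U : H ≃ₗᵢ[ℂ] K) :
    IsCommSeries V (fun x => U (δ x)) (fun x => U (γ x))
      ((U : H →L[ℂ] K) ∘L C ∘L (U.symm : K →L[ℂ] H)) := by
  intro ψ
  have hmap := (hC (U.symm ψ)).mapL (U : H →L[ℂ] K)
  refine hmap.congr_fun fun x => ?_
  simp [← U.inner_map_map _ (U.symm ψ)]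

/-- The weights `ω` and `ω²` reflect that `δ_x` and `g_x` have Fourier transforms of Lipschitz
constant `O(1 + |x|)` and `O((1 + |x|)²)`. -/
theorem norm_inner_le (hC : IsCommSeries V δ γ C) {ω : ι → ℝ}
    (hV : Summable fun x => |V x| * ω x ^ 3) {v w : H} {P Q : ℝ}
    (hδv : ∀ x, ‖⟪δ x, v⟫‖ ≤ P * ω x) (hγv : ∀ x, ‖⟪γ x, v⟫‖ ≤ P * ω x ^ 2)
    (hδw : ∀ x, ‖⟪δ x, w⟫‖ ≤ Q * ω x) (hγw : ∀ x, ‖⟪γ x, w⟫‖ ≤ Q * ω x ^ 2) :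
    ‖⟪w, C v⟫‖ ≤ 2 * P * Q * ∑' x, |V x| * ω x ^ 3 := by
  have hterm (x : ι) : ‖I * V x * (⟪γ x, v⟫ * ⟪w, δ x⟫ - ⟪δ x, v⟫ * ⟪w, γ x⟫)‖ ≤
      2 * P * Q * (|V x| * ω x ^ 3) := by
    have hcomm : ‖⟪γ x, v⟫ * ⟪w, δ x⟫ - ⟪δ x, v⟫ * ⟪w, γ x⟫‖ ≤
        P * ω x ^ 2 * (Q * ω x) + P * ω x * (Q * ω x ^ 2) := by
      refine (norm_sub_le _ _).trans ?_
      rw [norm_mul, norm_mul, norm_inner_symm w, norm_inner_symm w]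
      exact add_le_add
        (mul_le_mul (hγv x) (hδw x) (norm_nonneg _) ((norm_nonneg _).trans (hγv x)))
        (mul_le_mul (hδv x) (hγw x) (norm_nonneg _) ((norm_nonneg _).trans (hδv x)))
    rw [norm_mul, norm_mul, norm_I, one_mul, norm_real, Real.norm_eq_abs]
    calc |V x| * ‖⟪γ x, v⟫ * ⟪w, δ x⟫ - ⟪δ x, v⟫ * ⟪w, γ x⟫‖
        ≤ |V x| * (P * ω x ^ 2 * (Q * ω x) + P * ω x * (Q * ω x ^ 2)) := by gcongr
      _ = 2 * P * Q * (|V x| * ω x ^ 3) := by ring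
  rw [← (hC.hasSum_inner w v).tsum_eq, ← tsum_mul_left]
  exact tsum_of_norm_bounded (hV.mul_left _).hasSum hterm

end IsCommSeries

theorem inner_commutator_eq_zero_of_apply_eq_smul {T : H →L[ℂ] H}
    (hT : (T : H →ₗ[ℂ] H).IsSymmetric) {u : H} {μ : ℂ} (hu : T u = μ • u) (A : H →L[ℂ] H) :
    ⟪u, A (T u)⟫ - ⟪u, T (A u)⟫ = 0 := by
  rcases eq_or_ne u 0 with rfl | hu0
  · simp
  have hμ : Module.End.HasEigenvalue (T : H →ₗ[ℂ] H) μ :=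
    Module.End.hasEigenvalue_of_hasEigenvector
      ⟨Module.End.mem_eigenspace_iff.2 hu, hu0⟩
  have hreal : (starRingEnd ℂ) μ = μ := hT.conj_eigenvalue_eq_self hμ
  have hsymm : ⟪u, T (A u)⟫ = ⟪T u, A u⟫ := (hT u (A u)).symm
  rw [hsymm, hu, map_smul, inner_smul_right, inner_smul_left, hreal, sub_self]

end CommutatorSeries

section CriticalPoints

open Filter Asymptotics
open scoped Topology

theorem integrableAtFilter_inv_norm_sub_pow {E : Type*} [NormedAddCommGroup E] [NormedSpace ℝ E]
    [FiniteDimensional ℝ E] [MeasurableSpace E] [BorelSpace E] (μ : Measure E)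
    [μ.IsAddHaarMeasure] {n : ℕ} (hn : n < Module.finrank ℝ E) (p₀ : E) :
    IntegrableAtFilter (fun p => (‖p - p₀‖ ^ n)⁻¹) (𝓝 p₀) μ := by
  have : Nontrivial E := Module.nontrivial_of_finrank_pos (n.zero_le.trans_lt hn)
  have hradial : IntegrableOn (fun y : ℝ => y ^ (Module.finrank ℝ E - 1) • (y ^ n)⁻¹)
      (Set.Ioo 0 1) := by
    have hpow : IntegrableOn (fun y : ℝ => y ^ (Module.finrank ℝ E - 1 - n)) (Set.Ioo 0 1) :=
      ((continuous_pow _).continuousOn.integrableOn_compact isCompact_Icc).mono_set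
        Set.Ioo_subset_Icc_self
    refine hpow.congr_fun (fun y hy => ?_) measurableSet_Ioo
    exact pow_sub₀ y hy.1.ne' (by lia)
  have hball : IntegrableOn (fun p : E => (‖p‖ ^ n)⁻¹) (Metric.ball 0 1) μ :=
    (integrableOn_fun_norm_addHaar μ (f := fun y : ℝ => (y ^ n)⁻¹)).2 hradial
  have hshift := ((measurePreserving_sub_right μ p₀).integrableOn_comp_preimage
    (MeasurableEquiv.subRight p₀).measurableEmbedding).2 hball
  refine ⟨_, ?_, hshift⟩
  refine (continuous_id.sub continuous_const).continuousAt.preimage_mem_nhds ?_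
  simpa using Metric.ball_mem_nhds (0 : E) one_pos

variable {d : ℕ} {f : (Fin d → ℝ) → ℝ}

theorem gradSq_nonneg (f : (Fin d → ℝ) → ℝ) (p : Fin d → ℝ) : 0 ≤ gradSq f p :=
  Finset.sum_nonneg fun _ _ => sq_nonneg _

theorem contDiff_pd {m n : WithTop ℕ∞} (hf : ContDiff ℝ n f) (hmn : m + 1 ≤ n) (k : Fin d) :
    ContDiff ℝ m (pd f k) :=
  (hf.fderiv_right hmn).clm_apply contDiff_const

theorem contDiff_gradSq {m n : WithTop ℕ∞} (hf : ContDiff ℝ n f) (hmn : m + 1 ≤ n) :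
    ContDiff ℝ m (gradSq f) :=
  ContDiff.sum fun k _ => (contDiff_pd hf hmn k).pow 2

theorem pd_eq_zero_of_gradSq_eq_zero {p : Fin d → ℝ} (hp : gradSq f p = 0) (j : Fin d) :
    pd f j p = 0 :=
  pow_eq_zero_iff two_ne_zero |>.1 <|
    (Finset.sum_eq_zero_iff_of_nonneg fun k _ => sq_nonneg (pd f k p)).1 hp j (Finset.mem_univ j)

theorem fderiv_eq_zero_of_gradSq_eq_zero {p : Fin d → ℝ} (hp : gradSq f p = 0) :
    fderiv ℝ f p = 0 := by
  apply ContinuousLinearMap.coe_injective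
  refine LinearMap.pi_ext' fun j => LinearMap.ext_ring ?_
  exact pd_eq_zero_of_gradSq_eq_zero hp j

theorem norm_sq_pd_le_gradSq (f : (Fin d → ℝ) → ℝ) (p : Fin d → ℝ) :
    ‖fun j => pd f j p‖ ^ 2 ≤ gradSq f p := by
  rw [← Real.le_sqrt (norm_nonneg _) (gradSq_nonneg f p),
    pi_norm_le_iff_of_nonneg (Real.sqrt_nonneg _)]
  exact fun j => Real.abs_le_sqrt <| Finset.single_le_sum (f := fun k => pd f k p ^ 2)
    (fun _ _ => sq_nonneg _) (Finset.mem_univ j)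

theorem fderiv_pd_eq_vecMul_hess (f : (Fin d → ℝ) → ℝ) (p w : Fin d → ℝ) (j : Fin d) :
    fderiv ℝ (pd f j) p w = Matrix.vecMul w (hess f p) j := by
  conv_lhs => rw [pi_eq_sum_univ' w, map_sum]
  simp only [map_smul, smul_eq_mul]
  rfl

theorem IsMorse.isBigO_norm_sub_sq_gradSq (hM : IsMorse f) (hf : ContDiff ℝ 2 f)
    {p₀ : Fin d → ℝ} (hp₀ : gradSq f p₀ = 0) :
    (fun p => ‖p - p₀‖ ^ 2) =O[𝓝 p₀] gradSq f := by
  let D : (Fin d → ℝ) →L[ℝ] (Fin d → ℝ) := ContinuousLinearMap.pi fun j => fderiv ℝ (pd f j) p₀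
  have hD : HasFDerivAt (fun p j => pd f j p) D p₀ := hasFDerivAt_pi.2 fun j =>
    ((contDiff_pd hf (m := 1) (by norm_num) j).differentiable one_ne_zero p₀).hasFDerivAt
  have hker : LinearMap.ker (D : (Fin d → ℝ) →ₗ[ℝ] (Fin d → ℝ)) = ⊥ := by
    refine LinearMap.ker_eq_bot'.2 fun w hw => ?_
    refine Matrix.eq_zero_of_vecMul_eq_zero (hM p₀ (fderiv_eq_zero_of_gradSq_eq_zero hp₀)) ?_
    ext j
    rw [← fderiv_pd_eq_vecMul_hess]
    exact congrFun hw j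
  have hind : Topology.IsInducing D := (LinearMap.isClosedEmbedding_of_injective hker).isInducing
  have hgrad : (fun p => p - p₀) =O[𝓝 p₀] fun p j => pd f j p := by
    refine (hD.isTheta_sub hind).isBigO_symm.congr_right fun p => ?_
    ext j
    simp [pd_eq_zero_of_gradSq_eq_zero hp₀ j]
  refine (hgrad.norm_norm.pow 2).trans (IsBigO.of_norm_le fun p => ?_)
  rw [Real.norm_of_nonneg (by positivity)]
  exact norm_sq_pd_le_gradSq f p

theorem IsMorse.locallyIntegrable_inv_gradSq (hM : IsMorse f) (hd : 3 ≤ d)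
    (hf : ContDiff ℝ 2 f) : LocallyIntegrable fun p => (gradSq f p)⁻¹ := by
  have hcont : Continuous (gradSq f) := (contDiff_gradSq hf (m := 1) (by norm_num)).continuous
  have hmeas (p₀ : Fin d → ℝ) :
      StronglyMeasurableAtFilter (fun p => (gradSq f p)⁻¹) (𝓝 p₀) volume :=
    hcont.measurable.inv.stronglyMeasurable.stronglyMeasurableAtFilter
  intro p₀
  by_cases hp₀ : gradSq f p₀ = 0
  · have hO : (fun p => (gradSq f p)⁻¹) =O[𝓝 p₀] fun p => (‖p - p₀‖ ^ 2)⁻¹ :=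
      (hM.isBigO_norm_sub_sq_gradSq hf hp₀).inv_rev <| Eventually.of_forall fun p hp => by
        rwa [sub_eq_zero.1 (norm_eq_zero.1 (pow_eq_zero_iff two_ne_zero |>.1 hp))]
    refine hO.integrableAtFilter (hmeas p₀) (integrableAtFilter_inv_norm_sub_pow volume ?_ p₀)
    rw [Module.finrank_fin_fun]
    lia
  · exact Tendsto.integrableAtFilter (hmeas p₀) (Measure.finiteAt_nhds volume p₀)
      (hcont.continuousAt.inv₀ hp₀)

theorem IsMorse.ae_gradSq_ne_zero (hM : IsMorse f) [Nonempty (Fin d)] (hf : ContDiff ℝ 2 f) :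
    ∀ᵐ p, gradSq f p ≠ 0 := by
  rw [ae_iff]
  refine measure_null_of_locally_null _ fun p₀ hp₀ => ?_
  have hiso : ∀ᶠ p in 𝓝 p₀, gradSq f p = 0 → p = p₀ := by
    filter_upwards [(hM.isBigO_norm_sub_sq_gradSq hf (not_not.1 hp₀)).eq_zero_imp] with p hp hp0
    exact sub_eq_zero.1 (norm_eq_zero.1 (pow_eq_zero_iff two_ne_zero |>.1 (hp hp0)))
  refine ⟨{p₀}, ?_, measure_singleton p₀⟩
  filter_upwards [self_mem_nhdsWithin, nhdsWithin_le_nhds hiso] with p hp hpp₀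
  exact hpp₀ (not_not.1 hp)

/-- `|∇f|⁻²` is integrable over the torus. Since Lean has `0⁻¹ = 0`, integrability alone would not
prevent `∇f` from vanishing on a set of positive measure, so this is required separately. -/
structure HasIntegrableInvGradSq (f : (Fin d → ℝ) → ℝ) : Prop where
  ae_ne_zero : ∀ᵐ p ∂volume.restrict (torusBox d), gradSq f p ≠ 0
  integrableOn : IntegrableOn (fun p => (gradSq f p)⁻¹) (torusBox d)

theorem IsMorse.hasIntegrableInvGradSq (hM : IsMorse f) (hd : 3 ≤ d) (hf : ContDiff ℝ 2 f) :
    HasIntegrableInvGradSq f where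
  ae_ne_zero :=
    have : Nonempty (Fin d) := ⟨⟨0, by lia⟩⟩
    ae_restrict_of_ae (hM.ae_gradSq_ne_zero hf)
  integrableOn := (hM.locallyIntegrable_inv_gradSq hd hf).integrableOn_isCompact
    (isCompact_univ_pi fun _ => isCompact_Icc)

end CriticalPoints

section MultiplicationOperators

variable {X : Type*} [MeasurableSpace X] {μ : Measure X} {a : X → ℝ}

/-- Multiplication by the essentially bounded real function `a` on `L²(μ)`. -/
def mulOp (ha : MemLp (fun x => (a x : ℂ)) ∞ μ) : Lp ℂ 2 μ →L[ℂ] Lp ℂ 2 μ :=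
  (ContinuousLinearMap.mul ℂ ℂ).holderL μ ∞ 2 2 ha.toLp

theorem coeFn_mulOp (ha : MemLp (fun x => (a x : ℂ)) ∞ μ) (u : Lp ℂ 2 μ) :
    mulOp ha u =ᵐ[μ] fun x => (a x : ℂ) * u x := by
  filter_upwards [(ContinuousLinearMap.mul ℂ ℂ).coeFn_holder (r := 2) ha.toLp u, ha.coeFn_toLp]
    with x hmul ha_x
  exact hmul.trans (by rw [ha_x, ContinuousLinearMap.mul_apply'])

theorem isSymmetric_mulOp (ha : MemLp (fun x => (a x : ℂ)) ∞ μ) :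
    (mulOp ha : Lp ℂ 2 μ →ₗ[ℂ] Lp ℂ 2 μ).IsSymmetric := by
  intro u v
  simp only [ContinuousLinearMap.coe_coe, L2.inner_def]
  refine integral_congr_ae ?_
  filter_upwards [coeFn_mulOp ha u, coeFn_mulOp ha v] with x hu hv
  rw [hu, hv, ← smul_eq_mul, ← smul_eq_mul, inner_smul_left, inner_smul_right, conj_ofReal]

theorem norm_sq_eq_integral (u : Lp ℂ 2 μ) : ‖u‖ ^ 2 = ∫ x, ‖u x‖ ^ 2 ∂μ := by
  rw [← inner_self_eq_norm_sq (𝕜 := ℂ), L2.inner_def, ← integral_re (L2.integrable_inner u u)]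
  exact integral_congr_ae (.of_forall fun x => inner_self_eq_norm_sq (u x))

theorem integral_sqrt_mul_sqrt_le {f g : X → ℝ} (hf₀ : ∀ x, 0 ≤ f x) (hg₀ : ∀ x, 0 ≤ g x)
    (hf : Integrable f μ) (hg : Integrable g μ) :
    ∫ x, √(f x) * √(g x) ∂μ ≤ √((∫ x, f x ∂μ) * ∫ x, g x ∂μ) := by
  have memLp_sqrt {h : X → ℝ} (h₀ : ∀ x, 0 ≤ h x) (hh : Integrable h μ) :
      MemLp (fun x => √(h x)) (ENNReal.ofReal 2) μ := by
    rw [ENNReal.ofReal_ofNat, memLp_two_iff_integrable_sq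
      (Real.continuous_sqrt.comp_aestronglyMeasurable hh.aestronglyMeasurable)]
    simpa only [Real.sq_sqrt (h₀ _)] using hh
  have hHolder := integral_mul_le_Lp_mul_Lq_of_nonneg Real.HolderConjugate.two_two
    (.of_forall fun x => Real.sqrt_nonneg (f x)) (.of_forall fun x => Real.sqrt_nonneg (g x))
    (memLp_sqrt hf₀ hf) (memLp_sqrt hg₀ hg)
  simpa only [Real.rpow_two, Real.sq_sqrt (hf₀ _), Real.sq_sqrt (hg₀ _), ← Real.sqrt_eq_rpow,
    ← Real.sqrt_mul (integral_nonneg hf₀)] using hHolder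

theorem integral_norm_le_sqrt_mul {E : Type*} [NormedAddCommGroup E] {w : X → ℝ}
    (hw : ∀ x, 0 ≤ w x) (hw0 : ∀ᵐ x ∂μ, w x ≠ 0) (hinv : Integrable (fun x => (w x)⁻¹) μ)
    {u : X → E} (hu : Integrable (fun x => w x * ‖u x‖ ^ 2) μ) :
    ∫ x, ‖u x‖ ∂μ ≤ √((∫ x, (w x)⁻¹ ∂μ) * ∫ x, w x * ‖u x‖ ^ 2 ∂μ) := by
  have hprod : (fun x => ‖u x‖) =ᵐ[μ] fun x => √(w x)⁻¹ * √(w x * ‖u x‖ ^ 2) := by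
    filter_upwards [hw0] with x hx
    rw [← Real.sqrt_mul (inv_nonneg.2 (hw x)), inv_mul_cancel_left₀ hx,
      Real.sqrt_sq (norm_nonneg _)]
  rw [integral_congr_ae hprod]
  exact integral_sqrt_mul_sqrt_le (fun x => inv_nonneg.2 (hw x))
    (fun x => mul_nonneg (hw x) (sq_nonneg _)) hinv hu

theorem norm_inner_le_mul_integral_norm [IsFiniteMeasure μ] {v : Lp ℂ 2 μ} {M : ℝ}
    (hv : ∀ᵐ x ∂μ, ‖v x‖ ≤ M) (u : Lp ℂ 2 μ) : ‖⟪v, u⟫‖ ≤ M * ∫ x, ‖u x‖ ∂μ := by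
  have hu : Integrable (fun x => ‖u x‖) μ := ((Lp.memLp u).integrable one_le_two).norm
  rw [L2.inner_def, ← integral_const_mul]
  refine norm_integral_le_of_norm_le (hu.const_mul M) ?_
  filter_upwards [hv] with x hx
  exact (norm_inner_le_norm _ _).trans (by gcongr)

end MultiplicationOperators

section Torus

variable {d : ℕ}

/-- The torus `ℝ^d / ℤ^d`, on which `ℓ²(Γ)` is realised by Fourier series. -/
abbrev Torus (d : ℕ) := UnitAddTorus (Fin d)

/-- The normalised Haar measure of the torus. -/
def torusMeasure (d : ℕ) : Measure (Torus d) :=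
  Measure.pi fun _ => (AddCircle.haarAddCircle : Measure (AddCircle (1 : ℝ)))

instance : IsProbabilityMeasure (torusMeasure d) := by unfold torusMeasure; infer_instance

instance : (torusMeasure d).IsAddLeftInvariant := by unfold torusMeasure; infer_instance

/-- `L²` of the torus, the momentum representation of `ℓ²(Γ)`. -/
abbrev TorusL2 (d : ℕ) := Lp ℂ 2 (torusMeasure d)

/-- The covering map `ℝ^d → ℝ^d / ℤ^d`, scaled by `-1/(2π)`: it has kernel `2πℤ^d`, and the sign
turns the Fourier monomials of the torus into the characters `e^{-i⟨p,x⟩}`. -/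
def toTorus : (Fin d → ℝ) →+ Torus d where
  toFun t i := ((-(t i / (2 * π)) : ℝ) : AddCircle (1 : ℝ))
  map_zero' := by ext i; simp
  map_add' s t := by
    ext i
    rw [Pi.add_apply, Pi.add_apply, ← AddCircle.coe_add, add_div, neg_add]

/-- The section of `toTorus` with values in `[-π, π)^d`. -/
def momentum (θ : Torus d) : Fin d → ℝ :=
  fun i => -(2 * π) * (AddCircle.equivIoc 1 (-1 / 2 : ℝ) (θ i) : ℝ)

/-- The character `e^{-i⟨p,x⟩}`, which is the Fourier transform of `δ_x`. -/
def planeWave (x : Γd d) (p : Fin d → ℝ) : ℂ := Complex.exp (-(I * (dotZ p x : ℝ)))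

/-- The orthonormal basis of plane waves. -/
def planeWaveBasis (d : ℕ) : HilbertBasis (Γd d) ℂ (TorusL2 d) := UnitAddTorus.mFourierBasis

theorem continuous_toTorus : Continuous (toTorus : (Fin d → ℝ) → Torus d) :=
  continuous_pi fun i =>
    (AddCircle.continuous_mk' (1 : ℝ)).comp ((continuous_apply i).div_const _).neg

theorem toTorus_momentum (θ : Torus d) : toTorus (momentum θ) = θ := by
  ext i
  have hscale : -(momentum θ i / (2 * π)) = (AddCircle.equivIoc 1 (-1 / 2 : ℝ) (θ i) : ℝ) := by
    simp only [momentum]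
    field_simp
  exact (congrArg _ hscale).trans AddCircle.coe_equivIoc

theorem momentum_mem_torusBox (θ : Torus d) : momentum θ ∈ torusBox d := by
  intro i _
  obtain ⟨hlower, hupper⟩ := (AddCircle.equivIoc 1 (-1 / 2 : ℝ) (θ i)).2
  have := Real.pi_pos
  constructor <;> simp only [momentum] <;> nlinarith

theorem exists_eq_add_of_toTorus_eq {p p' : Fin d → ℝ} (h : toTorus p = toTorus p') :
    ∃ m : Γd d, p' = p + fun i => 2 * π * (m i : ℝ) := by
  have hcoord (i : Fin d) : ∃ m : ℤ, p' i = p i + 2 * π * (m : ℝ) := by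
    have hi : ((-(p i / (2 * π)) - -(p' i / (2 * π)) : ℝ) : AddCircle (1 : ℝ)) = 0 := by
      rw [AddCircle.coe_sub, sub_eq_zero]
      exact congrFun h i
    obtain ⟨m, hm⟩ := (AddCircle.coe_eq_zero_iff 1).1 hi
    refine ⟨m, ?_⟩
    rw [zsmul_eq_mul, mul_one] at hm
    rw [hm]
    field_simp
    ring
  choose m hm using hcoord
  exact ⟨m, funext hm⟩

theorem apply_momentum_add_toTorus {α : Type*} {q : (Fin d → ℝ) → α}
    (hq : ∀ (p : Fin d → ℝ) (m : Γd d), q (p + fun i => 2 * π * (m i : ℝ)) = q p)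
    (θ : Torus d) (t : Fin d → ℝ) : q (momentum (θ + toTorus t)) = q (momentum θ + t) := by
  obtain ⟨m, hm⟩ := exists_eq_add_of_toTorus_eq (p := momentum θ + t)
    (p' := momentum (θ + toTorus t)) (by rw [map_add, toTorus_momentum, toTorus_momentum])
  rw [hm, hq]

theorem coeFn_planeWaveBasis (x : Γd d) :
    planeWaveBasis d x =ᵐ[torusMeasure d] fun θ => planeWave x (momentum θ) := by
  have hbasis : planeWaveBasis d x = UnitAddTorus.mFourierLp 2 x :=
    congrFun UnitAddTorus.coe_mFourierBasis x
  rw [hbasis]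
  refine (UnitAddTorus.coeFn_mFourierLp 2 x).trans (.of_forall fun θ => ?_)
  have hfactor (i : Fin d) :
      fourier (x i) (θ i) = Complex.exp (-(I * ((momentum θ i * x i : ℝ) : ℂ))) := by
    conv_lhs => rw [← AddCircle.coe_equivIoc (p := (1 : ℝ)) (a := -1 / 2) (y := θ i)]
    rw [fourier_coe_apply]
    congr 1
    simp only [momentum]
    push_cast
    ring
  change ∏ i, fourier (x i) (θ i) = _
  simp only [hfactor, planeWave, dotZ, ← Complex.exp_sum, Complex.ofReal_sum, Finset.mul_sum,
    Finset.sum_neg_distrib]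

theorem measurePreserving_smul_volume {c : ℝ} (hc : c ≠ 0) :
    MeasurePreserving (fun x : Fin d → ℝ => c • x) volume (ENNReal.ofReal |c ^ d|⁻¹ • volume) := by
  refine ⟨measurable_const_smul c, ?_⟩
  rw [Measure.map_addHaar_smul volume hc, Module.finrank_fin_fun, abs_inv]

theorem measurePreserving_momentum (d : ℕ) :
    MeasurePreserving (momentum (d := d)) (torusMeasure d)
      (ENNReal.ofReal ((2 * π) ^ d)⁻¹ • volume.restrict (torusBox d)) := by
  set cube : Set (Fin d → ℝ) := {x | ∀ i, x i ∈ Set.Ioc (-1 / 2 : ℝ) (-1 / 2 + 1)} with hcube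
  have hcoords : MeasurePreserving (UnitAddTorus.measurableEquivPiIoc fun _ : Fin d => -1 / 2)
      (torusMeasure d) (Measure.comap Subtype.val volume) :=
    UnitAddTorus.measurePreserving_equivPiIoc fun _ : Fin d => -1 / 2
  have hval : MeasurePreserving (Subtype.val : cube → Fin d → ℝ)
      (Measure.comap Subtype.val volume) (volume.restrict cube) :=
    ⟨measurable_subtype_coe,
      map_comap_subtype_coe (s := cube) (.univ_pi' fun _ => measurableSet_Ioc) volume⟩
  have hpreimage : (fun x : Fin d → ℝ => (-(2 * π)) • x) ⁻¹'
      (Set.univ.pi fun _ => Set.Ico (-π) π) = cube := by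
    ext x
    simp only [hcube, Set.mem_preimage, Set.mem_univ_pi, Set.mem_ofPred_eq, Pi.smul_apply,
      smul_eq_mul, Set.mem_Ico, Set.mem_Ioc]
    refine forall_congr' fun i => ?_
    have := Real.pi_pos
    constructor <;> rintro ⟨h, h'⟩ <;> constructor <;> nlinarith
  have hbox : (volume : Measure (Fin d → ℝ)).restrict (Set.univ.pi fun _ => Set.Ico (-π) π) =
      volume.restrict (torusBox d) := by
    refine Measure.restrict_congr_set ?_
    rw [torusBox, Set.pi_univ_Icc]
    exact Measure.univ_pi_Ico_ae_eq_Icc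
  have hscale := (measurePreserving_smul_volume (d := d) (c := -(2 * π))
    (neg_ne_zero.2 Real.two_pi_pos.ne')).restrict_preimage
      (s := Set.univ.pi fun _ => Set.Ico (-π) π) (.univ_pi fun _ => measurableSet_Ico)
  rw [hpreimage, Measure.restrict_smul, hbox, abs_pow, abs_neg,
    abs_of_pos Real.two_pi_pos] at hscale
  exact hscale.comp (hval.comp hcoords)

theorem ae_momentum {P : (Fin d → ℝ) → Prop} (h : ∀ᵐ p ∂volume.restrict (torusBox d), P p) :
    ∀ᵐ θ ∂torusMeasure d, P (momentum θ) :=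
  (measurePreserving_momentum d).quasiMeasurePreserving.ae (Measure.ae_smul_measure h _)

theorem integrable_comp_momentum {E : Type*} [NormedAddCommGroup E] {q : (Fin d → ℝ) → E}
    (hq : IntegrableOn q (torusBox d)) :
    Integrable (fun θ => q (momentum θ)) (torusMeasure d) :=
  (measurePreserving_momentum d).integrable_comp_of_integrable
    (hq.smul_measure ENNReal.ofReal_ne_top)

theorem integral_comp_momentum {E : Type*} [NormedAddCommGroup E] [NormedSpace ℝ E]
    {q : (Fin d → ℝ) → E} (hq : Continuous q) :
    ∫ θ, q (momentum θ) ∂torusMeasure d = ((2 * π) ^ d)⁻¹ • ∫ p in torusBox d, q p := by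
  rw [← integral_map (measurePreserving_momentum d).aemeasurable hq.aestronglyMeasurable,
    (measurePreserving_momentum d).map_eq, integral_smul_measure,
    ENNReal.toReal_ofReal (by positivity)]

/-- Translation by `t` of functions of the momentum. -/
def translation (t : Fin d → ℝ) : TorusL2 d →ₗᵢ[ℂ] TorusL2 d :=
  Lp.compMeasurePreservingₗᵢ ℂ (· + toTorus t) (measurePreserving_add_right _ _)

theorem ae_add_toTorus {P : Torus d → Prop} (h : ∀ᵐ θ ∂torusMeasure d, P θ) (t : Fin d → ℝ) :
    ∀ᵐ θ ∂torusMeasure d, P (θ + toTorus t) :=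
  (measurePreserving_add_right (torusMeasure d) (toTorus t)).quasiMeasurePreserving.ae h

theorem coeFn_translation (t : Fin d → ℝ) (u : TorusL2 d) :
    translation t u =ᵐ[torusMeasure d] fun θ => u (θ + toTorus t) :=
  Lp.coeFn_compMeasurePreserving u (measurePreserving_add_right _ _)

theorem translation_translation_neg (t : Fin d → ℝ) (u : TorusL2 d) :
    translation t (translation (-t) u) = u := by
  refine Lp.ext ?_
  filter_upwards [coeFn_translation t (translation (-t) u),
    ae_add_toTorus (coeFn_translation (-t) u) t] with θ houter hinner
  rw [houter, hinner, map_neg, add_neg_cancel_right]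

theorem inner_translation_neg (t : Fin d → ℝ) (u v : TorusL2 d) :
    ⟪translation (-t) u, v⟫ = ⟪u, translation t v⟫ := by
  rw [← (translation t).inner_map_map, translation_translation_neg]

theorem tendsto_translation_zero (u : TorusL2 d) :
    Filter.Tendsto (fun t => translation t u) (nhds 0) (nhds u) := by
  have hshift : Continuous fun t : Fin d → ℝ =>
      (⟨fun θ => θ + toTorus t, by fun_prop⟩ : C(Torus d, Torus d)) :=
    ContinuousMap.continuous_of_continuous_uncurry _
      (continuous_snd.add (continuous_toTorus.comp continuous_fst))
  have hcont : Continuous fun t => translation t u :=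
    continuous_const.compMeasurePreservingLp hshift
      (fun t => measurePreserving_add_right (torusMeasure d) (toTorus t)) ENNReal.ofNat_ne_top
  have hzero : translation 0 u = u := by
    refine Lp.ext ?_
    filter_upwards [coeFn_translation 0 u] with θ h
    rw [h, map_zero, add_zero]
  simpa only [hzero] using hcont.tendsto 0

end Torus

section PeriodicFunctions

variable {d : ℕ} {E : Type*} [NormedAddCommGroup E]

/-- `q` is `2πℤ^d`-periodic, and `M` is both a bound and a Lipschitz constant for it (with respect
to the sup norm of `ℝ^d`), so that multiplication by a fixed such function preserves the class. -/
structure PeriodicLip (q : (Fin d → ℝ) → E) (M : ℝ) : Prop where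
  periodic : ∀ (p : Fin d → ℝ) (m : Γd d), q (p + fun i => 2 * π * (m i : ℝ)) = q p
  norm_le : ∀ p, ‖q p‖ ≤ M
  lipschitz : ∀ p p', ‖q p - q p'‖ ≤ M * ‖p - p'‖

theorem exists_norm_le_of_periodic {q : (Fin d → ℝ) → E} (hq : Continuous q)
    (hper : ∀ (p : Fin d → ℝ) (m : Γd d), q (p + fun i => 2 * π * (m i : ℝ)) = q p) :
    ∃ M, ∀ p, ‖q p‖ ≤ M := by
  have hcompact : IsCompact (torusBox d) := isCompact_univ_pi fun _ => isCompact_Icc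
  obtain ⟨M, hM⟩ := hcompact.exists_bound_of_continuousOn hq.continuousOn
  refine ⟨M, fun p => ?_⟩
  obtain ⟨m, hm⟩ := exists_eq_add_of_toTorus_eq (toTorus_momentum (toTorus p))
  rw [hm, hper]
  exact hM _ (momentum_mem_torusBox _)

namespace PeriodicLip

variable {q q' : (Fin d → ℝ) → E} {M M' : ℝ}

theorem nonneg (h : PeriodicLip q M) : 0 ≤ M := (norm_nonneg _).trans (h.norm_le 0)

theorem continuous (h : PeriodicLip q M) : Continuous q :=
  (LipschitzWith.of_dist_le_mul (K := ⟨M, h.nonneg⟩) fun p p' => by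
    rw [dist_eq_norm, dist_eq_norm]
    exact h.lipschitz p p').continuous

theorem mono (h : PeriodicLip q M) (hM : M ≤ M') : PeriodicLip q M' :=
  ⟨h.periodic, fun p => (h.norm_le p).trans hM, fun p p' => (h.lipschitz p p').trans (by gcongr)⟩

theorem apply_momentum_add (h : PeriodicLip q M) (θ : Torus d) (t : Fin d → ℝ) :
    q (momentum (θ + toTorus t)) = q (momentum θ + t) :=
  apply_momentum_add_toTorus h.periodic θ t

theorem norm_add_single_sub_le (h : PeriodicLip q M) (p : Fin d → ℝ) (j : Fin d) (s : ℝ) :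
    ‖q (p + Pi.single j s) - q p‖ ≤ M * |s| := by
  have hnorm : ‖p + Pi.single j s - p‖ = |s| := by
    rw [add_sub_cancel_left, Pi.norm_single, Real.norm_eq_abs]
  exact hnorm ▸ h.lipschitz (p + Pi.single j s) p

theorem add (h : PeriodicLip q M) (h' : PeriodicLip q' M') :
    PeriodicLip (fun p => q p + q' p) (M + M') where
  periodic p m := by rw [h.periodic, h'.periodic]
  norm_le p := norm_add_le_of_le (h.norm_le p) (h'.norm_le p)
  lipschitz p p' := by
    rw [add_sub_add_comm, add_mul]
    exact norm_add_le_of_le (h.lipschitz p p') (h'.lipschitz p p')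

theorem sum {ι : Type*} (s : Finset ι) {q : ι → (Fin d → ℝ) → E} {M : ι → ℝ}
    (h : ∀ k, PeriodicLip (q k) (M k)) : PeriodicLip (fun p => ∑ k ∈ s, q k p) (∑ k ∈ s, M k) where
  periodic p m := Finset.sum_congr rfl fun k _ => (h k).periodic p m
  norm_le p := norm_sum_le_of_le _ fun k _ => (h k).norm_le p
  lipschitz p p' := by
    rw [← Finset.sum_sub_distrib, Finset.sum_mul]
    exact norm_sum_le_of_le _ fun k _ => (h k).lipschitz p p'

theorem ofReal {q : (Fin d → ℝ) → ℝ} (h : PeriodicLip q M) :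
    PeriodicLip (fun p => (q p : ℂ)) M where
  periodic p m := by rw [h.periodic]
  norm_le p := by rw [Complex.norm_real]; exact h.norm_le p
  lipschitz p p' := by rw [← Complex.ofReal_sub, Complex.norm_real]; exact h.lipschitz p p'

theorem const_mul {q : (Fin d → ℝ) → ℂ} (h : PeriodicLip q M) (c : ℂ) :
    PeriodicLip (fun p => c * q p) (‖c‖ * M) where
  periodic p m := by rw [h.periodic]
  norm_le p := by rw [norm_mul]; gcongr; exact h.norm_le p
  lipschitz p p' := by rw [← mul_sub, norm_mul, mul_assoc]; gcongr; exact h.lipschitz p p'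

theorem mul {q q' : (Fin d → ℝ) → ℂ} (h : PeriodicLip q M) (h' : PeriodicLip q' M') :
    PeriodicLip (fun p => q p * q' p) (2 * M * M') where
  periodic p m := by rw [h.periodic, h'.periodic]
  norm_le p := by
    have hprod : ‖q p‖ * ‖q' p‖ ≤ M * M' :=
      mul_le_mul (h.norm_le p) (h'.norm_le p) (norm_nonneg _) h.nonneg
    rw [norm_mul]
    linarith [mul_nonneg h.nonneg h'.nonneg]
  lipschitz p p' := by
    have hM := h.nonneg
    calc ‖q p * q' p - q p' * q' p'‖
        = ‖q p * (q' p - q' p') + (q p - q p') * q' p'‖ := by ring_nf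
      _ ≤ ‖q p‖ * ‖q' p - q' p'‖ + ‖q p - q p'‖ * ‖q' p'‖ := by
          simpa only [norm_mul] using norm_add_le (q p * (q' p - q' p')) ((q p - q p') * q' p')
      _ ≤ M * (M' * ‖p - p'‖) + M * ‖p - p'‖ * M' := by
          gcongr
          exacts [h.norm_le p, h'.lipschitz p p', h.lipschitz p p', h'.norm_le p']
      _ = 2 * M * M' * ‖p - p'‖ := by ring

theorem memLp {q : (Fin d → ℝ) → ℝ} (h : PeriodicLip q M) :
    MemLp (fun θ => (q (momentum θ) : ℂ)) ∞ (torusMeasure d) :=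
  memLp_top_of_bound
    (Complex.measurable_ofReal.comp
      (h.continuous.measurable.comp (measurePreserving_momentum d).measurable)).aestronglyMeasurable
    M (.of_forall fun _ => h.ofReal.norm_le _)

end PeriodicLip

theorem fderiv_periodic {f : (Fin d → ℝ) → ℝ} (hf : Periodic2pi f) (p : Fin d → ℝ) (m : Γd d) :
    fderiv ℝ f (p + fun i => 2 * π * (m i : ℝ)) = fderiv ℝ f p := by
  rw [← fderiv_comp_add_right]
  congr 1
  exact funext fun p => hf p m

theorem Periodic2pi.pd {f : (Fin d → ℝ) → ℝ} (hf : Periodic2pi f) (k : Fin d) :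
    Periodic2pi (pd f k) := fun p m => by rw [LatSch.pd, fderiv_periodic hf, LatSch.pd]

theorem Periodic2pi.gradSq {f : (Fin d → ℝ) → ℝ} (hf : Periodic2pi f) :
    Periodic2pi (gradSq f) :=
  fun p m => Finset.sum_congr rfl fun k _ => by rw [hf.pd k p m]

theorem Periodic2pi.exists_periodicLip {f : (Fin d → ℝ) → ℝ} (hper : Periodic2pi f)
    (hf : ContDiff ℝ 1 f) : ∃ L, PeriodicLip f L := by
  obtain ⟨M₀, hM₀⟩ := exists_norm_le_of_periodic hf.continuous hper
  obtain ⟨M₁, hM₁⟩ := exists_norm_le_of_periodic (hf.continuous_fderiv one_ne_zero)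
    (fderiv_periodic hper)
  refine ⟨max M₀ M₁, hper, fun p => (hM₀ p).trans (le_max_left _ _), fun p p' => ?_⟩
  exact convex_univ.norm_image_sub_le_of_norm_fderiv_le (𝕜 := ℝ)
    (fun x _ => hf.differentiable one_ne_zero x) (fun x _ => (hM₁ x).trans (le_max_right _ _))
    (Set.mem_univ p') (Set.mem_univ p)

theorem hasDerivAt_add_single {f : (Fin d → ℝ) → ℝ} (hf : Differentiable ℝ f) (j : Fin d)
    (p : Fin d → ℝ) (t : ℝ) :
    HasDerivAt (fun t => f (p + Pi.single j t)) (pd f j (p + Pi.single j t)) t := by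
  have hline : HasDerivAt (fun t : ℝ => p + (Pi.single j t : Fin d → ℝ)) (Pi.single j 1) t :=
    (hasDerivAt_single j t).const_add p
  exact (hf _).hasFDerivAt.comp_hasDerivAt t hline

theorem abs_add_single_sub_sub_mul_pd_le {f : (Fin d → ℝ) → ℝ} (hf : Differentiable ℝ f)
    {j : Fin d} {L : ℝ} (hL : PeriodicLip (pd f j) L) (p : Fin d → ℝ) (s : ℝ) :
    |f (p + Pi.single j s) - f p - s * pd f j p| ≤ L * s ^ 2 := by
  have hderiv (t : ℝ) : HasDerivAt (fun t : ℝ => f (p + Pi.single j t) - t * pd f j p)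
      (pd f j (p + Pi.single j t) - pd f j p) t :=
    (hasDerivAt_add_single hf j p t).sub (hasDerivAt_mul_const (pd f j p))
  have hbound (t : ℝ) (ht : t ∈ Set.uIcc 0 s) :
      ‖pd f j (p + Pi.single j t) - pd f j p‖ ≤ L * |s| := by
    have hts : |t| ≤ |s| := by simpa only [sub_zero] using Set.abs_sub_left_of_mem_uIcc ht
    have := hL.nonneg
    exact (hL.norm_add_single_sub_le p j t).trans (by gcongr)
  have hmean := (convex_uIcc (0 : ℝ) s).norm_image_sub_le_of_norm_hasDerivWithin_le
    (fun t _ => (hderiv t).hasDerivWithinAt) hbound Set.left_mem_uIcc Set.right_mem_uIcc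
  simp only [Pi.single_zero, add_zero, zero_mul, sub_zero, Real.norm_eq_abs] at hmean
  rwa [sub_right_comm, ← sq_abs s, sq, ← mul_assoc]

theorem lnorm_nonneg (x : Γd d) : 0 ≤ lnorm x := Real.sqrt_nonneg _

theorem abs_apply_le_lnorm (x : Γd d) (k : Fin d) : |(x k : ℝ)| ≤ lnorm x :=
  Real.abs_le_sqrt (Finset.single_le_sum (f := fun k => (x k : ℝ) ^ 2)
    (fun _ _ => sq_nonneg _) (Finset.mem_univ k))

theorem planeWave_eq_exp_mul_I (x : Γd d) (p : Fin d → ℝ) :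
    planeWave x p = Complex.exp ((-dotZ p x : ℝ) * I) := by
  rw [planeWave, Complex.ofReal_neg, neg_mul, mul_comm]

theorem planeWave_periodic (x : Γd d) (p : Fin d → ℝ) (m : Γd d) :
    planeWave x (p + fun i => 2 * π * (m i : ℝ)) = planeWave x p := by
  have hdot : dotZ (p + fun i => 2 * π * (m i : ℝ)) x =
      dotZ p x + 2 * π * ((∑ i, m i * x i : ℤ) : ℝ) := by
    simp only [dotZ, Pi.add_apply, add_mul, Finset.sum_add_distrib, Int.cast_sum, Int.cast_mul,
      Finset.mul_sum, mul_assoc]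
  refine Complex.exp_eq_exp_iff_exists_int.2 ⟨-∑ i, m i * x i, ?_⟩
  rw [hdot]
  push_cast
  ring

theorem norm_planeWave_sub_le (x : Γd d) (p p' : Fin d → ℝ) :
    ‖planeWave x p - planeWave x p'‖ ≤ d * lnorm x * ‖p - p'‖ := by
  have hdot : |dotZ p' x - dotZ p x| ≤ d * lnorm x * ‖p - p'‖ := by
    have hterm (i : Fin d) : |p' i * x i - p i * x i| ≤ lnorm x * ‖p - p'‖ := by
      rw [← sub_mul, abs_mul, mul_comm, abs_sub_comm]
      exact mul_le_mul (abs_apply_le_lnorm x i) (norm_le_pi_norm (p - p') i) (abs_nonneg _)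
        (lnorm_nonneg x)
    rw [dotZ, dotZ, ← Finset.sum_sub_distrib]
    refine (Finset.abs_sum_le_sum_abs _ _).trans ((Finset.sum_le_sum fun i _ => hterm i).trans ?_)
    rw [Finset.sum_const, Finset.card_univ, Fintype.card_fin, nsmul_eq_mul, mul_assoc]
  have hfactor : planeWave x p - planeWave x p' =
      Complex.exp ((-dotZ p' x : ℝ) * I) *
        (Complex.exp (I * ((dotZ p' x - dotZ p x : ℝ) : ℂ)) - 1) := by
    rw [mul_sub, ← Complex.exp_add, mul_one, planeWave_eq_exp_mul_I, planeWave_eq_exp_mul_I]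
    congr 2
    push_cast
    ring
  rw [hfactor, norm_mul, Complex.norm_exp_ofReal_mul_I, one_mul]
  exact Real.norm_exp_I_mul_ofReal_sub_one_le.trans hdot

theorem periodicLip_planeWave (x : Γd d) :
    PeriodicLip (planeWave x) ((d + 1) * (1 + lnorm x)) where
  periodic := planeWave_periodic x
  norm_le p := by
    rw [planeWave_eq_exp_mul_I, Complex.norm_exp_ofReal_mul_I]
    nlinarith [lnorm_nonneg x, (Nat.cast_nonneg d : (0 : ℝ) ≤ d)]
  lipschitz p p' := by
    refine (norm_planeWave_sub_le x p p').trans ?_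
    have := lnorm_nonneg x
    gcongr <;> linarith

theorem ghat_eq_mul_planeWave (e : (Fin d → ℝ) → ℝ) (x : Γd d) :
    ghat e x = fun p =>
      (I / 2 * (gradSq e p : ℂ) + ∑ k, (x k : ℂ) * (pd e k p : ℂ)) * planeWave x p := by
  funext p
  simp only [ghat, planeWave, Complex.ofReal_sum, Complex.ofReal_mul, Complex.ofReal_intCast,
    mul_comm]

theorem periodicLip_ghat {e : (Fin d → ℝ) → ℝ} {L : ℝ} (hpd : ∀ k, PeriodicLip (pd e k) L)
    (hgrad : PeriodicLip (gradSq e) L) (x : Γd d) :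
    PeriodicLip (ghat e x) (2 * (d + 1) ^ 2 * L * (1 + lnorm x) ^ 2) := by
  have hx := lnorm_nonneg x
  have hL := hgrad.nonneg
  have hsymbol := (hgrad.ofReal.const_mul (I / 2)).add
    (PeriodicLip.sum Finset.univ fun k => (hpd k).ofReal.const_mul (x k : ℂ))
  have hconst : ‖I / 2‖ * L + ∑ k, ‖(x k : ℂ)‖ * L ≤ (d + 1) * L * (1 + lnorm x) := by
    have hsum : ∑ k, ‖(x k : ℂ)‖ * L ≤ d * (lnorm x * L) := by
      refine (Finset.sum_le_sum fun k _ => mul_le_mul_of_nonneg_right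
        ((Complex.norm_intCast _).trans_le (abs_apply_le_lnorm x k)) hL).trans ?_
      rw [Finset.sum_const, Finset.card_univ, Fintype.card_fin, nsmul_eq_mul]
    have hhalf : ‖I / 2‖ = 1 / 2 := by rw [norm_div, norm_I, Complex.norm_ofNat]
    rw [hhalf]
    nlinarith [mul_nonneg hL hx, mul_nonneg (Nat.cast_nonneg d : (0 : ℝ) ≤ d) hL]
  rw [ghat_eq_mul_planeWave]
  refine (hsymbol.mul (periodicLip_planeWave x)).mono ?_
  calc 2 * (‖I / 2‖ * L + ∑ k, ‖(x k : ℂ)‖ * L) * ((d + 1) * (1 + lnorm x))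
      ≤ 2 * ((d + 1) * L * (1 + lnorm x)) * ((d + 1) * (1 + lnorm x)) := by gcongr
    _ = 2 * (d + 1) ^ 2 * L * (1 + lnorm x) ^ 2 := by ring

end PeriodicFunctions

section DifferenceQuotients

variable {d : ℕ} {a : Torus d → ℝ}

/-- The weighted difference quotient `ε⁻¹ a (T - 1)`, where `T` translates by `ε` in the direction
of the `j`-th coordinate. For `a = ∂_j f` it is a bounded substitute for `∂_j f ∂_j`, one half (up
to symmetrisation) of the generator conjugate to multiplication by `f`. -/
def weightedDiff (ha : MemLp (fun θ => (a θ : ℂ)) ∞ (torusMeasure d)) (j : Fin d) (ε : ℝ) :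
    TorusL2 d →L[ℂ] TorusL2 d :=
  (ε : ℂ)⁻¹ • mulOp ha ∘L ((translation (Pi.single j ε)).toContinuousLinearMap - 1)

theorem coeFn_weightedDiff (ha : MemLp (fun θ => (a θ : ℂ)) ∞ (torusMeasure d)) (j : Fin d)
    (ε : ℝ) (u : TorusL2 d) :
    weightedDiff ha j ε u =ᵐ[torusMeasure d]
      fun θ => (ε : ℂ)⁻¹ * ((a θ : ℂ) * (u (θ + toTorus (Pi.single j ε)) - u θ)) := by
  set T := translation (Pi.single j ε)
  have happly : weightedDiff ha j ε u = (ε : ℂ)⁻¹ • mulOp ha (T u - u) := rfl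
  rw [happly]
  filter_upwards [Lp.coeFn_smul (ε : ℂ)⁻¹ (mulOp ha (T u - u)), coeFn_mulOp ha (T u - u),
    Lp.coeFn_sub (T u) u, coeFn_translation (Pi.single j ε) u] with θ hsmul hmul hsub htrans
  rw [hsmul, Pi.smul_apply, hmul, hsub, Pi.sub_apply, htrans, smul_eq_mul]

theorem adjoint_weightedDiff_apply (ha : MemLp (fun θ => (a θ : ℂ)) ∞ (torusMeasure d))
    (j : Fin d) (ε : ℝ) (u : TorusL2 d) :
    (weightedDiff ha j ε).adjoint u =
      (ε : ℂ)⁻¹ • (translation (-Pi.single j ε) (mulOp ha u) - mulOp ha u) := by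
  refine ext_inner_right ℂ fun v => ?_
  have hmul (w : TorusL2 d) : ⟪mulOp ha u, w⟫ = ⟪u, mulOp ha w⟫ := isSymmetric_mulOp ha u w
  rw [ContinuousLinearMap.adjoint_inner_left, inner_smul_left, inner_sub_left,
    inner_translation_neg, hmul, hmul, ← inner_sub_right, ← map_sub, map_inv₀, conj_ofReal,
    ← inner_smul_right]
  rfl

theorem coeFn_adjoint_weightedDiff (ha : MemLp (fun θ => (a θ : ℂ)) ∞ (torusMeasure d))
    (j : Fin d) (ε : ℝ) (u : TorusL2 d) :
    (weightedDiff ha j ε).adjoint u =ᵐ[torusMeasure d]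
      fun θ => (ε : ℂ)⁻¹ * ((a (θ + toTorus (Pi.single j (-ε))) : ℂ) *
        u (θ + toTorus (Pi.single j (-ε))) - a θ * u θ) := by
  rw [adjoint_weightedDiff_apply, ← Pi.single_neg]
  set w := mulOp ha u
  set T := translation (Pi.single j (-ε))
  have hmul : w =ᵐ[torusMeasure d] fun θ => (a θ : ℂ) * u θ := coeFn_mulOp ha u
  filter_upwards [Lp.coeFn_smul (ε : ℂ)⁻¹ (T w - w), Lp.coeFn_sub (T w) w,
    coeFn_translation (Pi.single j (-ε)) w, hmul, ae_add_toTorus hmul (Pi.single j (-ε))]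
    with θ hsmul hsub htrans hmul_θ hmul_shift
  rw [hsmul, Pi.smul_apply, hsub, Pi.sub_apply, htrans, hmul_shift, hmul_θ, smul_eq_mul]

/-- `v` is represented by a periodic function of the momentum that has bound and Lipschitz
constant `M`. The pairing with such vectors survives one difference quotient. -/
def HasLipRep (v : TorusL2 d) (M : ℝ) : Prop :=
  ∃ q : (Fin d → ℝ) → ℂ, PeriodicLip q M ∧ v =ᵐ[torusMeasure d] fun θ => q (momentum θ)

theorem HasLipRep.nonneg {v : TorusL2 d} {M : ℝ} (h : HasLipRep v M) : 0 ≤ M :=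
  let ⟨_, hq, _⟩ := h
  hq.nonneg

theorem HasLipRep.mono {v : TorusL2 d} {M M' : ℝ} (h : HasLipRep v M) (hM : M ≤ M') :
    HasLipRep v M' :=
  let ⟨q, hq, hv⟩ := h
  ⟨q, hq.mono hM, hv⟩

theorem HasLipRep.ae_norm_le {v : TorusL2 d} {M : ℝ} (h : HasLipRep v M) :
    ∀ᵐ θ ∂torusMeasure d, ‖v θ‖ ≤ M := by
  obtain ⟨q, hq, hv⟩ := h
  filter_upwards [hv] with θ hθ
  exact hθ ▸ hq.norm_le _

variable {α f : (Fin d → ℝ) → ℝ} {L M : ℝ} {v : TorusL2 d}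

theorem ae_norm_weightedDiff_le (hα : PeriodicLip α L) (hv : HasLipRep v M) (j : Fin d)
    {ε : ℝ} (hε : ε ≠ 0) :
    ∀ᵐ θ ∂torusMeasure d, ‖weightedDiff hα.memLp j ε v θ‖ ≤ 2 * L * M := by
  obtain ⟨q, hq, hv⟩ := hv
  filter_upwards [coeFn_weightedDiff hα.memLp j ε v, hv, ae_add_toTorus hv (Pi.single j ε)]
    with θ hdiff hv_θ hv_shift
  have hL := hα.nonneg
  have hM := hq.nonneg
  rw [hdiff, hv_θ, hv_shift, hq.apply_momentum_add, norm_mul, norm_mul, norm_inv,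
    Complex.norm_real, Real.norm_eq_abs, inv_mul_le_iff₀ (abs_pos.2 hε)]
  calc ‖(α (momentum θ) : ℂ)‖ * ‖q (momentum θ + Pi.single j ε) - q (momentum θ)‖
      ≤ L * (M * |ε|) := by
        gcongr
        exacts [hα.ofReal.norm_le _, hq.norm_add_single_sub_le _ j ε]
    _ ≤ |ε| * (2 * L * M) := by nlinarith [mul_nonneg (mul_nonneg hL hM) (abs_nonneg ε)]

theorem ae_norm_adjoint_weightedDiff_le (hα : PeriodicLip α L) (hv : HasLipRep v M) (j : Fin d)
    {ε : ℝ} (hε : ε ≠ 0) :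
    ∀ᵐ θ ∂torusMeasure d, ‖(weightedDiff hα.memLp j ε).adjoint v θ‖ ≤ 2 * L * M := by
  obtain ⟨q, hq, hv⟩ := hv
  have hprod := hα.ofReal.mul hq
  filter_upwards [coeFn_adjoint_weightedDiff hα.memLp j ε v, hv,
    ae_add_toTorus hv (Pi.single j (-ε))] with θ hdiff hv_θ hv_shift
  rw [hdiff, hv_θ, hv_shift, hα.apply_momentum_add, hq.apply_momentum_add, norm_mul, norm_inv,
    Complex.norm_real, Real.norm_eq_abs, inv_mul_le_iff₀ (abs_pos.2 hε), mul_comm |ε|, ← abs_neg ε]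
  exact hprod.norm_add_single_sub_le (momentum θ) j (-ε)

theorem norm_commutator_weightedDiff_sub_le (hf : PeriodicLip f M) (hf' : Differentiable ℝ f)
    {j : Fin d} (hL : PeriodicLip (pd f j) L) {ε : ℝ} (hε : ε ≠ 0) (u : TorusL2 d) :
    ‖weightedDiff hL.memLp j ε (mulOp hf.memLp u) - mulOp hf.memLp (weightedDiff hL.memLp j ε u) -
      mulOp hL.memLp (mulOp hL.memLp (translation (Pi.single j ε) u))‖ ≤ L * L * |ε| * ‖u‖ := by
  set T := translation (Pi.single j ε)
  set A := weightedDiff hL.memLp j ε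
  set Mf := mulOp hf.memLp
  set Mp := mulOp hL.memLp
  rw [← T.norm_map u]
  refine Lp.norm_le_mul_norm_of_ae_le_mul ?_
  filter_upwards [Lp.coeFn_sub (A (Mf u) - Mf (A u)) (Mp (Mp (T u))),
    Lp.coeFn_sub (A (Mf u)) (Mf (A u)), coeFn_mulOp hf.memLp (A u),
    coeFn_weightedDiff hL.memLp j ε u, coeFn_weightedDiff hL.memLp j ε (Mf u),
    coeFn_mulOp hf.memLp u, ae_add_toTorus (coeFn_mulOp hf.memLp u) (Pi.single j ε),
    coeFn_mulOp hL.memLp (Mp (T u)), coeFn_mulOp hL.memLp (T u),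
    coeFn_translation (Pi.single j ε) u]
    with θ hsub hsub' hMfA hA hAMf hMf hMf_shift hMpMp hMp hT
  rw [hsub, Pi.sub_apply, hsub', Pi.sub_apply, hMfA, hA, hAMf, hMf, hMf_shift, hMpMp, hMp, hT,
    hf.apply_momentum_add]
  set p := momentum θ
  set z := u (θ + toTorus (Pi.single j ε))
  have hremainder : (ε : ℂ)⁻¹ * (pd f j p * (f (p + Pi.single j ε) * z - f p * u θ)) -
      f p * ((ε : ℂ)⁻¹ * (pd f j p * (z - u θ))) - pd f j p * (pd f j p * z) =
      ((ε⁻¹ * pd f j p * (f (p + Pi.single j ε) - f p - ε * pd f j p) : ℝ) : ℂ) * z := by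
    have : (ε : ℂ) ≠ 0 := Complex.ofReal_ne_zero.2 hε
    push_cast
    field_simp
    ring
  rw [hremainder, norm_mul, Complex.norm_real, norm_mul, norm_mul, norm_inv, Real.norm_eq_abs ε]
  have hL₀ := hL.nonneg
  refine mul_le_mul_of_nonneg_right ?_ (norm_nonneg _)
  calc |ε|⁻¹ * ‖pd f j p‖ * ‖f (p + Pi.single j ε) - f p - ε * pd f j p‖
      ≤ |ε|⁻¹ * L * (L * ε ^ 2) := by
        gcongr
        exacts [hL.norm_le p, abs_add_single_sub_sub_mul_pd_le hf' hL p ε]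
    _ = L * L * |ε| := by
        rw [← sq_abs]
        have := abs_ne_zero.2 hε
        field_simp

theorem tendsto_commutator_weightedDiff (hf : PeriodicLip f M) (hf' : Differentiable ℝ f)
    {j : Fin d} (hL : PeriodicLip (pd f j) L) (u : TorusL2 d) :
    Filter.Tendsto (fun ε : ℝ => weightedDiff hL.memLp j ε (mulOp hf.memLp u) -
      mulOp hf.memLp (weightedDiff hL.memLp j ε u)) (nhdsWithin 0 {0}ᶜ)
      (nhds (mulOp hL.memLp (mulOp hL.memLp u))) := by
  have hsingle : Filter.Tendsto (fun ε : ℝ => (Pi.single j ε : Fin d → ℝ)) (nhds 0) (nhds 0) :=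
    (continuous_single j).tendsto' 0 0 (Pi.single_zero j)
  have htrans : Filter.Tendsto (fun ε : ℝ =>
      mulOp hL.memLp (mulOp hL.memLp (translation (Pi.single j ε) u))) (nhdsWithin 0 {0}ᶜ)
      (nhds (mulOp hL.memLp (mulOp hL.memLp u))) :=
    (((mulOp hL.memLp ∘L mulOp hL.memLp).continuous.tendsto u).comp
      ((tendsto_translation_zero u).comp hsingle)).mono_left nhdsWithin_le_nhds
  have hsmall : Filter.Tendsto (fun ε : ℝ => L * L * |ε| * ‖u‖) (nhdsWithin 0 {0}ᶜ) (nhds 0) :=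
    ((by fun_prop : Continuous fun ε : ℝ => L * L * |ε| * ‖u‖).tendsto' 0 0
      (by rw [abs_zero, mul_zero, zero_mul])).mono_left nhdsWithin_le_nhds
  have hremainder := squeeze_zero_norm'
    (eventually_mem_nhdsWithin.mono fun ε hε => norm_commutator_weightedDiff_sub_le hf hf' hL hε u)
    hsmall
  have hsum := hremainder.add htrans
  rw [zero_add] at hsum
  exact hsum.congr fun ε => sub_add_cancel _ _

theorem norm_sq_mulOp_pd_le (hf : PeriodicLip f M) (hf' : Differentiable ℝ f)
    {j : Fin d} (hL : PeriodicLip (pd f j) L) {u : TorusL2 d} {κ : ℝ}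
    (hκ : ∀ ε ≠ 0, ‖⟪u, weightedDiff hL.memLp j ε (mulOp hf.memLp u)⟫ -
      ⟪u, mulOp hf.memLp (weightedDiff hL.memLp j ε u)⟫‖ ≤ κ) :
    ‖mulOp hL.memLp u‖ ^ 2 ≤ κ := by
  have hlim := (((innerSL ℂ u).continuous.tendsto _).comp
    (tendsto_commutator_weightedDiff hf hf' hL u)).norm
  have hinner : ‖⟪u, mulOp hL.memLp (mulOp hL.memLp u)⟫‖ = ‖mulOp hL.memLp u‖ ^ 2 := by
    have hsymm : ⟪mulOp hL.memLp u, mulOp hL.memLp u⟫ =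
      ⟪u, mulOp hL.memLp (mulOp hL.memLp u)⟫ := isSymmetric_mulOp hL.memLp u _
    rw [← hsymm, ← inner_self_eq_norm_sq (𝕜 := ℂ), inner_self_re_eq_norm]
  rw [innerSL_apply_apply, hinner] at hlim
  refine le_of_tendsto hlim (eventually_mem_nhdsWithin.mono fun ε hε => ?_)
  simpa only [Function.comp_apply, innerSL_apply_apply, inner_sub_right] using hκ ε hε

end DifferenceQuotients

section WeightedEnergy

variable {d : ℕ} {f : (Fin d → ℝ) → ℝ} {L M : ℝ}

/-- The quadratic form `⟨u, |∇f|² u⟩` in the momentum representation. -/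
def gradEnergy (f : (Fin d → ℝ) → ℝ) (u : TorusL2 d) : ℝ :=
  ∫ θ, gradSq f (momentum θ) * ‖u θ‖ ^ 2 ∂torusMeasure d

/-- The mean of `|∇f|⁻²` over the torus, the constant in the weighted Cauchy–Schwarz inequality
`norm_inner_le_mul_sqrt_gradEnergy`. -/
def invGradSqIntegral (f : (Fin d → ℝ) → ℝ) : ℝ :=
  ∫ θ, (gradSq f (momentum θ))⁻¹ ∂torusMeasure d

theorem gradEnergy_nonneg (f : (Fin d → ℝ) → ℝ) (u : TorusL2 d) : 0 ≤ gradEnergy f u :=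
  integral_nonneg fun _ => mul_nonneg (gradSq_nonneg f _) (sq_nonneg _)

theorem invGradSqIntegral_nonneg (f : (Fin d → ℝ) → ℝ) : 0 ≤ invGradSqIntegral f :=
  integral_nonneg fun _ => inv_nonneg.2 (gradSq_nonneg f _)

theorem inner_mulOp_gradSq_self (h : PeriodicLip (gradSq f) L) (u : TorusL2 d) :
    ⟪u, mulOp h.memLp u⟫ = gradEnergy f u := by
  rw [gradEnergy, L2.inner_def, ← integral_complex_ofReal]
  refine integral_congr_ae ?_
  filter_upwards [coeFn_mulOp h.memLp u] with θ hθ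
  rw [hθ, ← smul_eq_mul, inner_smul_right, inner_self_eq_norm_sq_to_K]
  push_cast
  rfl

theorem integrable_norm_sq (u : TorusL2 d) : Integrable (fun θ => ‖u θ‖ ^ 2) (torusMeasure d) :=
  (Lp.memLp u).integrable_norm_pow two_ne_zero

theorem sum_norm_sq_mulOp_pd_ae_eq (hpd : ∀ k, PeriodicLip (pd f k) L) (u : TorusL2 d) :
    (fun θ => ∑ k, ‖mulOp (hpd k).memLp u θ‖ ^ 2) =ᵐ[torusMeasure d]
      fun θ => gradSq f (momentum θ) * ‖u θ‖ ^ 2 := by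
  filter_upwards [ae_all_iff.2 fun k => coeFn_mulOp (hpd k).memLp u] with θ hθ
  rw [gradSq, Finset.sum_mul]
  refine Finset.sum_congr rfl fun k _ => ?_
  rw [hθ k, norm_mul, Complex.norm_real, mul_pow, Real.norm_eq_abs, sq_abs]

theorem integrable_gradSq_mul_norm_sq (hpd : ∀ k, PeriodicLip (pd f k) L) (u : TorusL2 d) :
    Integrable (fun θ => gradSq f (momentum θ) * ‖u θ‖ ^ 2) (torusMeasure d) :=
  (integrable_finsetSum _ fun _ _ => integrable_norm_sq _).congr (sum_norm_sq_mulOp_pd_ae_eq hpd u)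

theorem gradEnergy_eq_sum (hpd : ∀ k, PeriodicLip (pd f k) L) (u : TorusL2 d) :
    gradEnergy f u = ∑ k, ‖mulOp (hpd k).memLp u‖ ^ 2 := by
  rw [gradEnergy, ← integral_congr_ae (sum_norm_sq_mulOp_pd_ae_eq hpd u),
    integral_finsetSum _ fun _ _ => integrable_norm_sq _]
  exact Finset.sum_congr rfl fun k _ => (norm_sq_eq_integral _).symm

theorem norm_inner_le_mul_sqrt_gradEnergy (hinv : HasIntegrableInvGradSq f)
    (hpd : ∀ k, PeriodicLip (pd f k) L) {v : TorusL2 d} (hM : 0 ≤ M)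
    (hv : ∀ᵐ θ ∂torusMeasure d, ‖v θ‖ ≤ M) (u : TorusL2 d) :
    ‖⟪v, u⟫‖ ≤ M * √(invGradSqIntegral f * gradEnergy f u) :=
  (norm_inner_le_mul_integral_norm hv u).trans <| mul_le_mul_of_nonneg_left
    (integral_norm_le_sqrt_mul (fun _ => gradSq_nonneg f _) (ae_momentum hinv.ae_ne_zero)
      (integrable_comp_momentum hinv.integrableOn) (integrable_gradSq_mul_norm_sq hpd u)) hM

theorem eq_zero_of_gradEnergy_eq_zero (hne : ∀ᵐ p ∂volume.restrict (torusBox d), gradSq f p ≠ 0)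
    (hpd : ∀ k, PeriodicLip (pd f k) L) {u : TorusL2 d} (hu : gradEnergy f u = 0) : u = 0 := by
  have hzero := (integral_eq_zero_iff_of_nonneg
    (fun _ => mul_nonneg (gradSq_nonneg f _) (sq_nonneg _)) (integrable_gradSq_mul_norm_sq hpd u)).1
      hu
  refine Lp.eq_zero_iff_ae_eq_zero.2 ?_
  filter_upwards [hzero, ae_momentum hne] with θ hθ hne_θ
  exact norm_eq_zero.1 (sq_eq_zero_iff.1 ((mul_eq_zero.1 hθ).resolve_left hne_θ))

end WeightedEnergy

section PositivityAndVirial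

variable {d : ℕ} {ι : Type*}

/-- `v` has norm at most `P` as a functional on the vectors with a Lipschitz representative. -/
def LipDualNormLe (v : TorusL2 d) (P : ℝ) : Prop :=
  ∀ ⦃z : TorusL2 d⦄ ⦃M : ℝ⦄, HasLipRep z M → ‖⟪z, v⟫‖ ≤ P * M

/-- The commutator series of a potential `V` that is summable against `ω³`, where `ω x` and
`(ω x)²` control, up to the factor `B`, Lipschitz representatives of `δ_x` and `γ_x`. -/
structure IsLipCommSeries (V ω : ι → ℝ) (B : ℝ) (δ γ : ι → TorusL2 d)
    (C : TorusL2 d →L[ℂ] TorusL2 d) : Prop where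
  isCommSeries : IsCommSeries V δ γ C
  summable : Summable fun x => |V x| * ω x ^ 3
  hasLipRep_left : ∀ x, HasLipRep (δ x) (B * ω x)
  hasLipRep_right : ∀ x, HasLipRep (γ x) (B * ω x ^ 2)

variable {V ω : ι → ℝ} {B : ℝ} {δ γ : ι → TorusL2 d} {C : TorusL2 d →L[ℂ] TorusL2 d}

theorem IsLipCommSeries.norm_inner_le (hC : IsLipCommSeries V ω B δ γ C) {v w : TorusL2 d}
    {P Q : ℝ} (hv : LipDualNormLe v P) (hw : LipDualNormLe w Q) :
    ‖⟪w, C v⟫‖ ≤ 2 * (P * B) * (Q * B) * ∑' x, |V x| * ω x ^ 3 := by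
  refine hC.isCommSeries.norm_inner_le hC.summable ?_ ?_ ?_ ?_ <;> intro x <;> rw [mul_assoc]
  exacts [hv (hC.hasLipRep_left x), hv (hC.hasLipRep_right x), hw (hC.hasLipRep_left x),
    hw (hC.hasLipRep_right x)]

variable {f α : (Fin d → ℝ) → ℝ} {L L' : ℝ}

theorem lipDualNormLe_sqrt_gradEnergy (hinv : HasIntegrableInvGradSq f)
    (hpd : ∀ k, PeriodicLip (pd f k) L) (u : TorusL2 d) :
    LipDualNormLe u √(invGradSqIntegral f * gradEnergy f u) := fun z M hz => by
  rw [mul_comm]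
  exact norm_inner_le_mul_sqrt_gradEnergy hinv hpd hz.nonneg hz.ae_norm_le u

theorem lipDualNormLe_weightedDiff (hinv : HasIntegrableInvGradSq f)
    (hpd : ∀ k, PeriodicLip (pd f k) L) (hα : PeriodicLip α L') (j : Fin d) {ε : ℝ} (hε : ε ≠ 0)
    (u : TorusL2 d) :
    LipDualNormLe (weightedDiff hα.memLp j ε u)
      (2 * L' * √(invGradSqIntegral f * gradEnergy f u)) := fun z M hz => by
  rw [← ContinuousLinearMap.adjoint_inner_left, mul_right_comm]
  exact norm_inner_le_mul_sqrt_gradEnergy hinv hpd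
    (mul_nonneg (mul_nonneg zero_le_two hα.nonneg) hz.nonneg)
    (ae_norm_adjoint_weightedDiff_le hα hz j hε) u

theorem lipDualNormLe_adjoint_weightedDiff (hinv : HasIntegrableInvGradSq f)
    (hpd : ∀ k, PeriodicLip (pd f k) L) (hα : PeriodicLip α L') (j : Fin d) {ε : ℝ} (hε : ε ≠ 0)
    (u : TorusL2 d) :
    LipDualNormLe ((weightedDiff hα.memLp j ε).adjoint u)
      (2 * L' * √(invGradSqIntegral f * gradEnergy f u)) := fun z M hz => by
  rw [ContinuousLinearMap.adjoint_inner_right, mul_right_comm]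
  exact norm_inner_le_mul_sqrt_gradEnergy hinv hpd
    (mul_nonneg (mul_nonneg zero_le_two hα.nonneg) hz.nonneg)
    (ae_norm_weightedDiff_le hα hz j hε) u

theorem norm_inner_commSeries_self_le (hinv : HasIntegrableInvGradSq f)
    (hpd : ∀ k, PeriodicLip (pd f k) L) (hC : IsLipCommSeries V ω B δ γ C) (u : TorusL2 d) :
    ‖⟪u, C u⟫‖ ≤
      2 * B ^ 2 * invGradSqIntegral f * (∑' x, |V x| * ω x ^ 3) * gradEnergy f u := by
  have hu := lipDualNormLe_sqrt_gradEnergy hinv hpd u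
  have hsqrt := Real.mul_self_sqrt
    (mul_nonneg (invGradSqIntegral_nonneg f) (gradEnergy_nonneg f u))
  refine (hC.norm_inner_le hu hu).trans_eq ?_
  linear_combination 2 * B ^ 2 * (∑' x, |V x| * ω x ^ 3) * hsqrt

theorem isPositive_mulOp_gradSq_add (hinv : HasIntegrableInvGradSq f)
    (hpd : ∀ k, PeriodicLip (pd f k) L) (hgrad : PeriodicLip (gradSq f) L')
    (hC : IsLipCommSeries V ω B δ γ C)
    (hsmall : 2 * B ^ 2 * invGradSqIntegral f * ∑' x, |V x| * ω x ^ 3 ≤ 1) :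
    (mulOp hgrad.memLp + C).IsPositive := by
  refine ContinuousLinearMap.isPositive_def.2
    ⟨(isSymmetric_mulOp hgrad.memLp).add hC.isCommSeries.isSymmetric, fun u => ?_⟩
  have hle : ‖⟪u, C u⟫‖ ≤ gradEnergy f u := (norm_inner_commSeries_self_le hinv hpd hC u).trans
    (mul_le_of_le_one_left (gradEnergy_nonneg f u) hsmall)
  rw [ContinuousLinearMap.reApplyInnerSelf_apply, inner_re_symm, add_apply,
    inner_add_right, inner_mulOp_gradSq_self hgrad, map_add]
  have := (abs_le.1 ((Complex.abs_re_le_norm _).trans hle)).1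
  simp only [RCLike.re_to_complex, Complex.ofReal_re]
  linarith

theorem norm_commutator_weightedDiff_le_of_apply_eq_smul (hinv : HasIntegrableInvGradSq f)
    (hpd : ∀ k, PeriodicLip (pd f k) L) (hf : PeriodicLip f L')
    (hC : IsLipCommSeries V ω B δ γ C) {u : TorusL2 d} {μ : ℂ}
    (hu : (mulOp hf.memLp + C) u = μ • u) (j : Fin d) {ε : ℝ} (hε : ε ≠ 0) :
    ‖⟪u, weightedDiff (hpd j).memLp j ε (mulOp hf.memLp u)⟫ -
      ⟪u, mulOp hf.memLp (weightedDiff (hpd j).memLp j ε u)⟫‖ ≤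
      8 * L * B ^ 2 * invGradSqIntegral f * (∑' x, |V x| * ω x ^ 3) * gradEnergy f u := by
  set A := weightedDiff (hpd j).memLp j ε
  set Mf := mulOp hf.memLp
  have hvirial : ⟪u, A (Mf u)⟫ - ⟪u, Mf (A u)⟫ = ⟪u, C (A u)⟫ - ⟪A.adjoint u, C u⟫ := by
    have hzero := inner_commutator_eq_zero_of_apply_eq_smul
      ((isSymmetric_mulOp hf.memLp).add hC.isCommSeries.isSymmetric) hu A
    simp only [add_apply, map_add, inner_add_right] at hzero
    rw [ContinuousLinearMap.adjoint_inner_left]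
    linear_combination hzero
  have hdual := lipDualNormLe_sqrt_gradEnergy hinv hpd u
  have hfirst := hC.norm_inner_le (lipDualNormLe_weightedDiff hinv hpd (hpd j) j hε u) hdual
  have hsecond := hC.norm_inner_le hdual
    (lipDualNormLe_adjoint_weightedDiff hinv hpd (hpd j) j hε u)
  have hsqrt := Real.mul_self_sqrt
    (mul_nonneg (invGradSqIntegral_nonneg f) (gradEnergy_nonneg f u))
  rw [hvirial]
  refine (norm_sub_le_of_le hfirst hsecond).trans_eq ?_
  linear_combination 8 * L * B ^ 2 * (∑' x, |V x| * ω x ^ 3) * hsqrt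

theorem eq_zero_of_mulOp_add_apply_eq_smul (hinv : HasIntegrableInvGradSq f)
    (hpd : ∀ k, PeriodicLip (pd f k) L) (hf : PeriodicLip f L') (hf' : Differentiable ℝ f)
    (hC : IsLipCommSeries V ω B δ γ C)
    (hsmall : d * (8 * L * B ^ 2 * invGradSqIntegral f * ∑' x, |V x| * ω x ^ 3) < 1)
    {u : TorusL2 d} {μ : ℂ} (hu : (mulOp hf.memLp + C) u = μ • u) : u = 0 := by
  set κ := 8 * L * B ^ 2 * invGradSqIntegral f * ∑' x, |V x| * ω x ^ 3
  have henergy : gradEnergy f u ≤ d * κ * gradEnergy f u := by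
    calc gradEnergy f u = ∑ k, ‖mulOp (hpd k).memLp u‖ ^ 2 := gradEnergy_eq_sum hpd u
      _ ≤ ∑ _k : Fin d, κ * gradEnergy f u := Finset.sum_le_sum fun k _ =>
          norm_sq_mulOp_pd_le hf hf' (hpd k) fun ε hε =>
            norm_commutator_weightedDiff_le_of_apply_eq_smul hinv hpd hf hC hu k hε
      _ = d * κ * gradEnergy f u := by
          rw [Finset.sum_const, Finset.card_univ, Fintype.card_fin, nsmul_eq_mul, mul_assoc (d : ℝ)]
  refine eq_zero_of_gradEnergy_eq_zero hinv.ae_ne_zero hpd ?_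
  nlinarith [gradEnergy_nonneg f u]

end PositivityAndVirial

section MomentumRepresentation

variable {d : ℕ}

theorem repr_planeWaveBasis (x : Γd d) : (planeWaveBasis d).repr (planeWaveBasis d x) = delta x :=
  (planeWaveBasis d).repr_self x

theorem conj_planeWave (x : Γd d) (p : Fin d → ℝ) :
    (starRingEnd ℂ) (planeWave x p) = Complex.exp (I * (dotZ p x : ℝ)) := by
  rw [planeWave, ← Complex.exp_conj, map_neg, map_mul, conj_I, conj_ofReal, neg_mul, neg_neg]

theorem inner_planeWaveBasis {q : (Fin d → ℝ) → ℂ} (hq : Continuous q) {v : TorusL2 d}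
    (hv : v =ᵐ[torusMeasure d] fun θ => q (momentum θ)) (m : Γd d) :
    ⟪planeWaveBasis d m, v⟫ = ((1 / (2 * π) ^ d : ℝ) : ℂ) *
      ∫ p in torusBox d, q p * Complex.exp (I * (dotZ p m : ℝ)) := by
  have hcont : Continuous fun p => q p * Complex.exp (I * (dotZ p m : ℝ)) := by
    unfold dotZ
    fun_prop
  rw [one_div, ← Complex.real_smul, ← integral_comp_momentum hcont, L2.inner_def]
  refine integral_congr_ae ?_
  filter_upwards [coeFn_planeWaveBasis m, hv] with θ hbasis hv_θ
  rw [hbasis, hv_θ, RCLike.inner_apply, conj_planeWave]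

theorem hasLipRep_repr_symm {q : (Fin d → ℝ) → ℂ} {M : ℝ} (hq : PeriodicLip q M) {v : L2 d}
    (hv : ∀ m, v m = ((1 / (2 * π) ^ d : ℝ) : ℂ) *
      ∫ p in torusBox d, q p * Complex.exp (I * (dotZ p m : ℝ))) :
    HasLipRep ((planeWaveBasis d).repr.symm v) M := by
  have hmem : MemLp (fun θ => q (momentum θ)) 2 (torusMeasure d) :=
    .of_bound (hq.continuous.measurable.comp
      (measurePreserving_momentum d).measurable).aestronglyMeasurable M
      (.of_forall fun _ => hq.norm_le _)
  have hsymm : (planeWaveBasis d).repr.symm v = hmem.toLp := by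
    rw [LinearIsometryEquiv.symm_apply_eq]
    ext m
    rw [hv m, (planeWaveBasis d).repr_apply_apply,
      inner_planeWaveBasis hq.continuous hmem.coeFn_toLp]
  exact ⟨q, hq, hsymm ▸ hmem.coeFn_toLp⟩

theorem hasLipRep_planeWaveBasis (x : Γd d) :
    HasLipRep (planeWaveBasis d x) ((d + 1) * (1 + lnorm x)) :=
  ⟨planeWave x, periodicLip_planeWave x, coeFn_planeWaveBasis x⟩

theorem planeWave_mul_exp (x y : Γd d) (p : Fin d → ℝ) :
    planeWave y p * Complex.exp (I * (dotZ p x : ℝ)) =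
      Complex.exp (I * (dotZ p (x - y) : ℝ)) := by
  have hdot : dotZ p (x - y) = dotZ p x - dotZ p y := by
    simp only [dotZ, Pi.sub_apply, Int.cast_sub, mul_sub, Finset.sum_sub_distrib]
  rw [planeWave, ← Complex.exp_add, hdot]
  congr 1
  push_cast
  ring

/-- The operator `T` of `ℓ²(Γ)` in the momentum representation. -/
def momentumRep (T : L2 d →L[ℂ] L2 d) : TorusL2 d →L[ℂ] TorusL2 d :=
  ((planeWaveBasis d).repr.symm : L2 d →L[ℂ] TorusL2 d) ∘L T ∘L
    ((planeWaveBasis d).repr : TorusL2 d →L[ℂ] L2 d)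

theorem momentumRep_repr_symm (T : L2 d →L[ℂ] L2 d) (ψ : L2 d) :
    momentumRep T ((planeWaveBasis d).repr.symm ψ) = (planeWaveBasis d).repr.symm (T ψ) :=
  congrArg (fun φ => (planeWaveBasis d).repr.symm (T φ))
    ((planeWaveBasis d).repr.apply_symm_apply ψ)

theorem isPositive_of_momentumRep {T : L2 d →L[ℂ] L2 d} (hT : (momentumRep T).IsPositive) :
    T.IsPositive := by
  exact (ContinuousLinearMap.isPositive_toLinearMap_iff T).1 <|
    (LinearMap.isPositive_linearIsometryEquiv_conj_iff (planeWaveBasis d).repr.symm).1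
      ((ContinuousLinearMap.isPositive_toLinearMap_iff _).2 hT)

theorem momentumRep_add (S T : L2 d →L[ℂ] L2 d) :
    momentumRep (S + T) = momentumRep S + momentumRep T := by
  rw [momentumRep, ContinuousLinearMap.add_comp, ContinuousLinearMap.comp_add]
  rfl

theorem momentumRep_eq_mulOp {f : (Fin d → ℝ) → ℝ} (hf : Continuous f)
    (hf_mem : MemLp (fun θ => (f (momentum θ) : ℂ)) ∞ (torusMeasure d)) {G : L2 d →L[ℂ] L2 d}
    (hG : IsMultiplier f G) : momentumRep G = mulOp hf_mem := by
  refine ContinuousLinearMap.ext_on (s := Set.range (planeWaveBasis d))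
    (Submodule.dense_iff_topologicalClosure_eq_top.2 (planeWaveBasis d).dense_span) ?_
  rintro _ ⟨y, rfl⟩
  refine (planeWaveBasis d).repr.injective (lp.ext (funext fun x => ?_))
  have hmul : mulOp hf_mem (planeWaveBasis d y) =ᵐ[torusMeasure d]
      fun θ => (f (momentum θ) : ℂ) * planeWave y (momentum θ) := by
    filter_upwards [coeFn_mulOp hf_mem (planeWaveBasis d y), coeFn_planeWaveBasis y] with θ h h'
    rw [h, h']
  have hcont : Continuous fun p => (f p : ℂ) * planeWave y p :=
    (Complex.continuous_ofReal.comp hf).mul (periodicLip_planeWave y).continuous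
  rw [(planeWaveBasis d).repr_apply_apply, (planeWaveBasis d).repr_apply_apply,
    inner_planeWaveBasis hcont hmul, ← (planeWaveBasis d).repr.inner_map_map]
  have hrep : (planeWaveBasis d).repr (momentumRep G (planeWaveBasis d y)) = G (delta y) := by
    rw [← repr_planeWaveBasis]
    exact (planeWaveBasis d).repr.apply_symm_apply _
  simp only [hrep, repr_planeWaveBasis, hG x y, fCoeff, mul_assoc, planeWave_mul_exp]

theorem IsCommOp.isCommSeries_momentumRep {V : Γd d → ℝ} {g : Γd d → L2 d}
    {C : L2 d →L[ℂ] L2 d} (hC : IsCommOp V g C) :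
    IsCommSeries V (planeWaveBasis d) (fun x => (planeWaveBasis d).repr.symm (g x))
      (momentumRep C) := by
  have hseries : IsCommSeries V delta g C := hC
  have hdelta : (fun x => (planeWaveBasis d).repr.symm (delta x)) = planeWaveBasis d :=
    funext fun x => by rw [← repr_planeWaveBasis, LinearIsometryEquiv.symm_apply_apply]
  exact hdelta ▸ hseries.conj (planeWaveBasis d).repr.symm

end MomentumRepresentation

section SmallPotentials

variable {d : ℕ} {V : Γd d → ℝ}

theorem Phi_one_le_Phi_two (n : ℕ) (V : Γd d → ℝ) : Phi 1 n V ≤ Phi 2 n V := by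
  rw [Phi, Phi, pow_one, sq, ← ENNReal.tsum_mul_right]
  refine ENNReal.tsum_le_tsum fun x => le_trans ?_ (mul_le_mul_right (ENNReal.le_tsum x) _)
  have hω : 1 ≤ (1 + lnorm x) ^ n := one_le_pow₀ (le_add_of_nonneg_right (lnorm_nonneg x))
  have hsqrt : |V x| ^ (1 / ((2 : ℕ) : ℝ)) * |V x| ^ (1 / ((2 : ℕ) : ℝ)) = |V x| := by
    rw [Nat.cast_ofNat, ← Real.sqrt_eq_rpow, Real.mul_self_sqrt (abs_nonneg _)]
  rw [← ENNReal.ofReal_mul (by positivity)]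
  refine ENNReal.ofReal_le_ofReal ?_
  rw [mul_mul_mul_comm, hsqrt, Nat.cast_one, div_one, Real.rpow_one]
  exact mul_le_mul_of_nonneg_left (le_mul_of_one_le_left (zero_le_one.trans hω) hω)
    (abs_nonneg _)

theorem hasSum_toReal_Phi_one {n : ℕ} (hV : Phi 1 n V ≠ ∞) :
    HasSum (fun x => |V x| * (1 + lnorm x) ^ n) (Phi 1 n V).toReal := by
  rw [Phi, pow_one] at hV ⊢
  rw [ENNReal.tsum_toReal_eq (ENNReal.ne_top_of_tsum_ne_top hV)]
  refine (ENNReal.hasSum_toReal hV).congr_fun fun x => ?_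
  have := lnorm_nonneg x
  rw [ENNReal.toReal_ofReal (by positivity), Nat.cast_one, div_one, Real.rpow_one]

variable {e : (Fin d → ℝ) → ℝ} {L : ℝ}

theorem exists_forall_periodicLip_pd (he : Periodic2pi e) (he2 : ContDiff ℝ 2 e) :
    ∃ L, 0 ≤ L ∧ ∀ k, PeriodicLip (pd e k) L := by
  choose L hL using fun k =>
    (he.pd k).exists_periodicLip (contDiff_pd he2 one_add_one_eq_two.le k)
  have hL_nonneg := fun k => (hL k).nonneg
  exact ⟨∑ k, L k, Finset.sum_nonneg fun k _ => hL_nonneg k, fun k =>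
    (hL k).mono (Finset.single_le_sum (fun k _ => hL_nonneg k) (Finset.mem_univ k))⟩

theorem IsCommOp.isLipCommSeries_momentumRep {g : Γd d → L2 d} {C : L2 d →L[ℂ] L2 d}
    (hC : IsCommOp V g C) (hg : IsGVec e g) (hpd : ∀ k, PeriodicLip (pd e k) L)
    (hgrad : PeriodicLip (gradSq e) L) (hV : Summable fun x => |V x| * (1 + lnorm x) ^ 3) :
    IsLipCommSeries V (fun x => 1 + lnorm x) (d + 1 + 2 * (d + 1) ^ 2 * L) (planeWaveBasis d)
      (fun x => (planeWaveBasis d).repr.symm (g x)) (momentumRep C) where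
  isCommSeries := hC.isCommSeries_momentumRep
  summable := hV
  hasLipRep_left x := by
    have hω : 0 ≤ 1 + lnorm x := add_nonneg zero_le_one (lnorm_nonneg x)
    have hL := hgrad.nonneg
    refine (hasLipRep_planeWaveBasis x).mono (mul_le_mul_of_nonneg_right ?_ hω)
    exact le_add_of_nonneg_right (by positivity)
  hasLipRep_right x := by
    refine (hasLipRep_repr_symm (periodicLip_ghat hpd hgrad x) (hg x)).mono
      (mul_le_mul_of_nonneg_right ?_ (sq_nonneg _))
    exact le_add_of_nonneg_left (by positivity)

variable {ι : Type*} {W ω : ι → ℝ} {B L' : ℝ} {δ γ : ι → TorusL2 d}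
  {G C : L2 d →L[ℂ] L2 d}

theorem isPositive_add_of_isMultiplier (hinv : HasIntegrableInvGradSq e)
    (hpd : ∀ k, PeriodicLip (pd e k) L) (hgrad : PeriodicLip (gradSq e) L')
    (hG : IsMultiplier (gradSq e) G) (hC : IsLipCommSeries W ω B δ γ (momentumRep C))
    (hsmall : 2 * B ^ 2 * invGradSqIntegral e * ∑' x, |W x| * ω x ^ 3 ≤ 1) :
    (G + C).IsPositive := by
  refine isPositive_of_momentumRep ?_
  rw [momentumRep_add, momentumRep_eq_mulOp hgrad.continuous hgrad.memLp hG]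
  exact isPositive_mulOp_gradSq_add hinv hpd hgrad hC hsmall

theorem eq_zero_of_isMultiplier_of_add_apply_eq_smul {f : (Fin d → ℝ) → ℝ}
    (hinv : HasIntegrableInvGradSq f) (hpd : ∀ k, PeriodicLip (pd f k) L)
    (hf : PeriodicLip f L') (hf' : Differentiable ℝ f) (hG : IsMultiplier f G)
    (hC : IsLipCommSeries W ω B δ γ (momentumRep C))
    (hsmall : d * (8 * L * B ^ 2 * invGradSqIntegral f * ∑' x, |W x| * ω x ^ 3) < 1)
    {ψ : L2 d} {μ : ℂ} (hψ : (G + C) ψ = μ • ψ) : ψ = 0 := by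
  refine (planeWaveBasis d).repr.symm.map_eq_zero_iff.1 ?_
  refine eq_zero_of_mulOp_add_apply_eq_smul hinv hpd hf hf' hC hsmall (μ := μ) ?_
  rw [← momentumRep_eq_mulOp hf.continuous hf.memLp hG, ← momentumRep_add, momentumRep_repr_symm,
    hψ, map_smul]

theorem statement14_general (d : ℕ) (e : (Fin d → ℝ) → ℝ) (he : Periodic2pi e)
    (heC3 : ContDiff ℝ 3 e) (hinv : HasIntegrableInvGradSq e)
    (hinv_grad : HasIntegrableInvGradSq (gradSq e)) :
    ∃ c : ℝ, 0 < c ∧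
      ∀ (V : Γd d → ℝ) (g : Γd d → L2 d) (G Cv : L2 d →L[ℂ] L2 d),
        IsGVec e g → IsMultiplier (gradSq e) G → IsCommOp V g Cv →
        Phi 1 3 V < ENNReal.ofReal c →
        (∀ ψ : L2 d, ∃ r : ℝ, 0 ≤ r ∧ ⟪ψ, (G + Cv) ψ⟫ = (r : ℂ)) ∧
        (∀ (ψ : L2 d) (μ : ℂ), (G + Cv) ψ = μ • ψ → ψ = 0) := by
  have hgradC2 : ContDiff ℝ 2 (gradSq e) := contDiff_gradSq heC3 two_add_one_eq_three.le
  obtain ⟨L₁, hL₁, hpd⟩ := exists_forall_periodicLip_pd he (heC3.of_le (by norm_num))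
  obtain ⟨L₂, hgrad⟩ := he.gradSq.exists_periodicLip (hgradC2.of_le one_le_two)
  obtain ⟨L₃, hL₃, hpd_grad⟩ := exists_forall_periodicLip_pd he.gradSq hgradC2
  set B := d + 1 + 2 * (d + 1) ^ 2 * max L₁ L₂
  set X := 2 * B ^ 2 * invGradSqIntegral e
  set Y := d * (8 * L₃ * B ^ 2 * invGradSqIntegral (gradSq e))
  have hX : 0 ≤ X := mul_nonneg (by positivity) (invGradSqIntegral_nonneg e)
  have hY : 0 ≤ Y := mul_nonneg d.cast_nonneg
    (mul_nonneg (by positivity) (invGradSqIntegral_nonneg _))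
  refine ⟨(1 + X + Y)⁻¹, by positivity, fun V g G Cv hg hG hCv hV => ?_⟩
  have hsum := hasSum_toReal_Phi_one hV.ne_top
  have hC := hCv.isLipCommSeries_momentumRep hg (fun k => (hpd k).mono (le_max_left _ _))
    (hgrad.mono (le_max_right _ _)) hsum.summable
  have hS : (1 + X + Y) * ∑' x, |V x| * (1 + lnorm x) ^ 3 < 1 := by
    rw [hsum.tsum_eq, ← lt_inv_mul_iff₀ (by positivity), mul_one]
    exact ENNReal.toReal_lt_of_lt_ofReal hV
  have hS_nonneg : 0 ≤ ∑' x, |V x| * (1 + lnorm x) ^ 3 := hsum.tsum_eq ▸ ENNReal.toReal_nonneg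
  refine ⟨fun ψ => ?_, fun ψ μ => ?_⟩
  · have hpos := isPositive_add_of_isMultiplier hinv hpd hgrad hG hC
      (by nlinarith [mul_nonneg hY hS_nonneg])
    obtain ⟨r, hr, hr_eq⟩ := RCLike.nonneg_iff_exists_ofReal.1 (hpos.inner_nonneg_right ψ)
    exact ⟨r, hr, hr_eq.symm⟩
  · exact eq_zero_of_isMultiplier_of_add_apply_eq_smul hinv_grad hpd_grad hgrad
      (hgradC2.differentiable two_ne_zero) hG hC
      (by nlinarith [mul_nonneg hX hS_nonneg])

end SmallPotentials

/-- Positivity and absence of eigenvalues for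
`B = h(|∇𝔢|²) + C_V` when `Φ_{2,3}(V)` is small. -/
theorem statement14 (d : ℕ) (hd : 3 ≤ d)
    (e : (Fin d → ℝ) → ℝ) (he : IsDispersion e) (heC3 : ContDiff ℝ 3 e) (heM : CondM e) :
    ∃ c : ℝ, 0 < c ∧
      ∀ (V : Γd d → ℝ) (g : Γd d → L2 d) (G Cv : L2 d →L[ℂ] L2 d),
        IsGVec e g → IsMultiplier (gradSq e) G → IsCommOp V g Cv →
        Phi 2 3 V < ENNReal.ofReal c →
        (∀ ψ : L2 d, ∃ r : ℝ, 0 ≤ r ∧ ⟪ψ, (G + Cv) ψ⟫ = (r : ℂ)) ∧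
        (∀ (ψ : L2 d) (μ : ℂ), (G + Cv) ψ = μ • ψ → ψ = 0) := by
  obtain ⟨c, hc, h⟩ := statement14_general d e he.1 heC3
    (heM.1.hasIntegrableInvGradSq hd (heC3.of_le (by norm_num)))
    (heM.2.hasIntegrableInvGradSq hd (contDiff_gradSq heC3 two_add_one_eq_three.le))
  exact ⟨c, hc, fun V g G Cv hg hG hCv hV =>
    h V g G Cv hg hG hCv ((Phi_one_le_Phi_two 3 V).trans_lt hV)⟩

end LatSch
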